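/- Let k ≥ 3 be odd. For every ε > 0 there exists N such that for all n ≥ N, every multiplicative k-Sidon subset A of {1,2,…,n} satisfies |A| ≤ π(n) + π(n/2) + n^{2/3}(log n)^{2^{1/3} − 1/3 + ε}. -/

import Mathlib

/-- A finite set of naturals is a multiplicative `k`-Sidon set if the equation
`s₁s₂⋯s_k = t₁t₂⋯t_k` has no solution consisting of `2k` pairwise distinct elements of it. -/
def MulSidonK (k : ℕ) (A : Finset ℕ) : Prop :=
  ¬ ∃ s t : Fin k → ℕ, (∀ i, s i ∈ A) ∧ (∀ i, t i ∈ A) ∧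
    Function.Injective (Sum.elim s t) ∧ ∏ i, s i = ∏ i, t i

/-!
If every member of `A` is written as `x * y` with `x ∈ X` and `y ∈ Y`, then `A` becomes the edge set
of a bipartite graph, and a cycle of length `2k` in it would be a solution of `s₁⋯s_k = t₁⋯t_k`.

For `k = 3`, the members with a prime factor above `n^(2/3)` contribute
`π(n) + π(n/2) + O(n^(2/3))`, because a prime in `(n/2, n]` has degree at most one. A member that is
neither of this kind nor below `√n` has, for every `m`, either a `2^m`-rough divisor in
`[n^(1/3), n^(2/3)]` or an arbitrary divisor in `[√n, 2^m √n]`. A dyadic range of divisors of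
density `δ` accounts for `O(δ^(2/3) n^(2/3))` members, by the bound `(|X||Y|)^(2/3)` for the number
of edges of a hexagon-free graph. The second kind of divisor lives on `m + 1` dyadic ranges; the
first on `O(log n)` ranges, but there with density only `O(1/m)`. Hence the remaining members number
`O(n^(2/3) (m + m^(-2/3) log n))`, and `m ≈ (log n)^(3/5)` balances the two terms.

The passage from `k` to `k + 2` costs four elements: either `A` has a solution of
`s₁s₂ = t₁t₂`, whose removal leaves a multiplicative `k`-Sidon set, or `A` is a multiplicative
`2`-Sidon set and has at most `π(n) + O(n^(5/6))` members.
-/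

open Finset

section BipartiteGraphs

variable {α β : Type*} {r : α → β → Prop}

/-- The bipartite graph of the relation `r` contains no cycle
`x₀ y₀ x₁ y₁ … xₖ₋₁ yₖ₋₁` of length `2 * k`; the indices `Fin k` wrap around. -/
def CycleFree (k : ℕ) [NeZero k] (r : α → β → Prop) : Prop :=
  ¬ ∃ (x : Fin k → α) (y : Fin k → β), Function.Injective x ∧ Function.Injective y ∧
    ∀ i, r (x i) (y i) ∧ r (x (i + 1)) (y i)

lemma CycleFree.swap {k : ℕ} [NeZero k] (hr : CycleFree k r) : CycleFree k (Function.swap r) := by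
  rintro ⟨y, x, hy, hx, hadj⟩
  exact hr ⟨x, fun i => y (i + 1), hx, hy.comp (add_left_injective 1),
    fun i => ⟨(hadj i).2, (hadj (i + 1)).1⟩⟩

lemma CycleFree.eq_of_adj_two (hr : CycleFree 2 r) {x x' : α} {y y' : β} (hxx' : x ≠ x')
    (hxy : r x y) (hx'y : r x' y) (hx'y' : r x' y') (hxy' : r x y') : y = y' := by
  by_contra hyy'
  refine hr ⟨![x, x'], ![y, y'], ?_, ?_, ?_⟩ <;>
    simp [Function.Injective, Fin.forall_fin_two, *, Ne.symm]

lemma CycleFree.not_hexagon (hr : CycleFree 3 r) {x₁ x₂ x₃ : α} {y₁ y₂ y₃ : β}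
    (hx₁₂ : x₁ ≠ x₂) (hx₁₃ : x₁ ≠ x₃) (hx₂₃ : x₂ ≠ x₃)
    (hy₁₂ : y₁ ≠ y₂) (hy₁₃ : y₁ ≠ y₃) (hy₂₃ : y₂ ≠ y₃)
    (h₁₁ : r x₁ y₁) (h₂₁ : r x₂ y₁) (h₂₂ : r x₂ y₂) (h₃₂ : r x₃ y₂) (h₃₃ : r x₃ y₃) :
    ¬ r x₁ y₃ := by
  intro h₁₃
  refine hr ⟨![x₁, x₂, x₃], ![y₁, y₂, y₃], ?_, ?_, ?_⟩
  · simp [Function.Injective, Fin.forall_fin_succ, *, Ne.symm]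
  · simp [Function.Injective, Fin.forall_fin_succ, *, Ne.symm]
  · simp [Fin.forall_fin_succ, *]

variable [∀ a b, Decidable (r a b)]

lemma card_interedges_eq_sum_left (X : Finset α) (Y : Finset β) :
    #(Rel.interedges r X Y) = ∑ x ∈ X, #{y ∈ Y | r x y} := by
  simp only [Rel.interedges, card_filter, sum_product]

lemma card_interedges_eq_sum_right (X : Finset α) (Y : Finset β) :
    #(Rel.interedges r X Y) = ∑ y ∈ Y, #{x ∈ X | r x y} := by
  simp only [Rel.interedges, card_filter, sum_product_right]

lemma CycleFree.sum_sq_card_le (hr : CycleFree 2 r) (X : Finset α) (Y : Finset β) :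
    ∑ x ∈ X, #{y ∈ Y | r x y} ^ 2 ≤ #(Rel.interedges r X Y) + #Y ^ 2 := by
  classical
  have pairs : ∀ x, #{y ∈ Y | r x y} ^ 2 =
      #{y ∈ Y | r x y} + #{p ∈ Y.offDiag | r x p.1 ∧ r x p.2} := by
    intro x
    have h := offDiag_card {y ∈ Y | r x y}
    have : ({y ∈ Y | r x y}).offDiag = {p ∈ Y.offDiag | r x p.1 ∧ r x p.2} := by
      ext p; simp only [mem_offDiag, mem_filter]; tauto
    rw [← this, h, sq, Nat.add_sub_cancel' (Nat.le_mul_self _)]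
  have codegree : ∀ p ∈ Y.offDiag, #{x ∈ X | r x p.1 ∧ r x p.2} ≤ 1 := by
    intro p hp
    refine card_le_one.2 fun x hx x' hx' => ?_
    simp only [mem_offDiag, mem_filter] at hp hx hx'
    by_contra hxx'
    exact hp.2.2 (hr.eq_of_adj_two hxx' hx.2.1 hx'.2.1 hx'.2.2 hx.2.2)
  calc ∑ x ∈ X, #{y ∈ Y | r x y} ^ 2
      = #(Rel.interedges r X Y) + ∑ x ∈ X, #{p ∈ Y.offDiag | r x p.1 ∧ r x p.2} := by
        rw [sum_congr rfl fun x _ => pairs x, sum_add_distrib, card_interedges_eq_sum_left]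
    _ = #(Rel.interedges r X Y) + ∑ p ∈ Y.offDiag, #{x ∈ X | r x p.1 ∧ r x p.2} := by
        congr 1
        exact sum_card_bipartiteAbove_eq_sum_card_bipartiteBelow
          fun x (p : β × β) => r x p.1 ∧ r x p.2
    _ ≤ #(Rel.interedges r X Y) + #Y ^ 2 := by
        gcongr
        refine (sum_le_card_nsmul _ _ 1 codegree).trans ?_
        rw [smul_eq_mul, mul_one, offDiag_card, sq]
        exact Nat.sub_le _ _

lemma CycleFree.card_interedges_two_le (hr : CycleFree 2 r) (X : Finset α) (Y : Finset β) :
    #(Rel.interedges r X Y) ≤ #X + #Y ^ 2 := by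
  have h := hr.sum_sq_card_le X Y
  have : 2 * #(Rel.interedges r X Y) ≤ #X + ∑ x ∈ X, #{y ∈ Y | r x y} ^ 2 := by
    rw [card_interedges_eq_sum_left, mul_sum, card_eq_sum_ones, ← sum_add_distrib]
    refine sum_le_sum fun x _ => ?_
    nlinarith [two_mul_le_add_sq 1 (#{y ∈ Y | r x y})]
  omega

lemma CycleFree.sq_card_interedges_two_le (hr : CycleFree 2 r) (X : Finset α) (Y : Finset β) :
    #(Rel.interedges r X Y) ^ 2 ≤ #X * (#(Rel.interedges r X Y) + #Y ^ 2) := by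
  refine le_trans ?_ (Nat.mul_le_mul_left _ (hr.sum_sq_card_le X Y))
  rw [card_interedges_eq_sum_left]
  exact sq_sum_le_card_mul_sum_sq

lemma CycleFree.exists_codegree_le_two (hr : CycleFree 3 r) {X : Finset α} {x : α} {y y' c : β}
    (hyy' : y ≠ y') (hyc : y ≠ c) (hy'c : y' ≠ c) (hxy : r x y) (hxy' : r x y') :
    #{p ∈ X | r p c ∧ r p y} ≤ 2 ∨ #{p ∈ X | r p c ∧ r p y'} ≤ 2 := by
  classical
  by_contra! h
  obtain ⟨p, hp, hpx⟩ := exists_mem_ne (one_lt_two.trans h.1) x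
  obtain ⟨q, hq, hqxp⟩ : ∃ q ∈ {q ∈ X | r q c ∧ r q y'}, q ∉ ({x, p} : Finset α) :=
    exists_mem_notMem_of_card_lt_card (card_le_two.trans_lt h.2)
  simp only [mem_filter, mem_insert, mem_singleton, not_or] at hp hq hqxp
  exact hr.not_hexagon hpx.symm (Ne.symm hqxp.1) (Ne.symm hqxp.2) hyc hyy' hy'c.symm
    hxy hp.2.2 hp.2.1 hq.2.1 hq.2.2 hxy'

lemma CycleFree.degree_le (hr : CycleFree 3 r) (X : Finset α) (Y : Finset β) (x : α) :
    #{y ∈ Y | r x y} ≤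
      2 + #{p ∈ Y ×ˢ Y | (r x p.1 ∧ r x p.2) ∧ #{x' ∈ X | r x' p.1 ∧ r x' p.2} ≤ 2} := by
  classical
  obtain hN | ⟨c, hc⟩ := ({y ∈ Y | r x y}).eq_empty_or_nonempty
  · simp [hN]
  have many : #{y ∈ ({y ∈ Y | r x y}).erase c | ¬ #{x' ∈ X | r x' c ∧ r x' y} ≤ 2} ≤ 1 := by
    refine card_le_one.2 fun y hy y' hy' => ?_
    simp only [mem_filter, mem_erase] at hy hy'
    by_contra hyy'
    exact (hr.exists_codegree_le_two hyy' hy.1.1 hy'.1.1 hy.1.2.2 hy'.1.2.2).elim hy.2 hy'.2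
  have few : #{y ∈ ({y ∈ Y | r x y}).erase c | #{x' ∈ X | r x' c ∧ r x' y} ≤ 2} ≤
      #{p ∈ Y ×ˢ Y | (r x p.1 ∧ r x p.2) ∧ #{x' ∈ X | r x' p.1 ∧ r x' p.2} ≤ 2} := by
    refine card_le_card_of_injOn (fun y => (c, y)) (fun y hy => ?_)
      (Prod.mk_right_injective c).injOn
    simp only [coe_filter, mem_erase, mem_filter, Set.mem_ofPred_eq, mem_product] at hy hc ⊢
    exact ⟨⟨hc.1, hy.1.2.1⟩, ⟨hc.2, hy.1.2.2⟩, hy.2⟩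
  have := card_filter_add_card_filter_not (s := ({y ∈ Y | r x y}).erase c)
    (fun y => #{x' ∈ X | r x' c ∧ r x' y} ≤ 2)
  have := card_erase_add_one hc
  omega

lemma CycleFree.card_interedges_three_le (hr : CycleFree 3 r) (X : Finset α) (Y : Finset β) :
    #(Rel.interedges r X Y) ≤ 2 * #X + 2 * #Y ^ 2 := by
  have count : ∀ p ∈ Y ×ˢ Y, #{x ∈ X | (r x p.1 ∧ r x p.2) ∧
      #{x' ∈ X | r x' p.1 ∧ r x' p.2} ≤ 2} ≤ 2 := by
    intro p _
    by_cases hp : #{x' ∈ X | r x' p.1 ∧ r x' p.2} ≤ 2 <;> simp [hp]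
  calc #(Rel.interedges r X Y)
      ≤ ∑ x ∈ X, (2 + #{p ∈ Y ×ˢ Y | (r x p.1 ∧ r x p.2) ∧
          #{x' ∈ X | r x' p.1 ∧ r x' p.2} ≤ 2}) := by
        rw [card_interedges_eq_sum_left]
        exact sum_le_sum fun x _ => hr.degree_le X Y x
    _ = 2 * #X + ∑ p ∈ Y ×ˢ Y, #{x ∈ X | (r x p.1 ∧ r x p.2) ∧
          #{x' ∈ X | r x' p.1 ∧ r x' p.2} ≤ 2} := by
        rw [sum_add_distrib, sum_const, smul_eq_mul, mul_comm]
        congr 1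
        exact sum_card_bipartiteAbove_eq_sum_card_bipartiteBelow fun x (p : β × β) =>
          (r x p.1 ∧ r x p.2) ∧ #{x' ∈ X | r x' p.1 ∧ r x' p.2} ≤ 2
    _ ≤ 2 * #X + 2 * #Y ^ 2 := by
        gcongr
        refine (sum_le_card_nsmul _ _ 2 count).trans_eq ?_
        rw [card_product, smul_eq_mul, mul_comm, sq]

lemma card_interedges_le_of_no_path {X : Finset α} {Y : Finset β}
    (h : ∀ x ∈ X, ∀ x' ∈ X, ∀ y₁ ∈ Y, ∀ y₂ ∈ Y, ∀ y₃ ∈ Y, x ≠ x' → y₁ ≠ y₂ → y₁ ≠ y₃ → y₂ ≠ y₃ →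
      r x y₁ → r x y₂ → r x' y₂ → ¬ r x' y₃) :
    #(Rel.interedges r X Y) ≤ 2 * #X + #Y := by
  classical
  have light : ∑ x ∈ X with #{y ∈ Y | r x y} ≤ 2, #{y ∈ Y | r x y} ≤ 2 * #X := by
    refine (sum_le_card_nsmul _ _ 2 fun x hx => (mem_filter.1 hx).2).trans ?_
    rw [smul_eq_mul, mul_comm]
    exact Nat.mul_le_mul_left 2 (card_filter_le _ _)
  have heavy_neighbor : ∀ y ∈ Y, #{x ∈ {x ∈ X | ¬ #{y' ∈ Y | r x y'} ≤ 2} | r x y} ≤ 1 := by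
    refine fun y hy => card_le_one.2 fun x hx x' hx' => ?_
    simp only [mem_filter, not_le] at hx hx'
    by_contra hxx'
    obtain ⟨y₁, hy₁, hne₁⟩ := exists_mem_ne (one_lt_two.trans hx.1.2) y
    obtain ⟨y₃, hy₃, hne₃⟩ : ∃ y₃ ∈ {y ∈ Y | r x' y}, y₃ ∉ ({y, y₁} : Finset β) :=
      exists_mem_notMem_of_card_lt_card (card_le_two.trans_lt hx'.1.2)
    simp only [mem_filter, mem_insert, mem_singleton, not_or] at hy₁ hy₃ hne₃
    exact h x hx.1.1 x' hx'.1.1 y₁ hy₁.1 y hy y₃ hy₃.1 hxx' hne₁ (Ne.symm hne₃.2)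
      (Ne.symm hne₃.1) hy₁.2 hx.2 hx'.2 hy₃.2
  have heavy : ∑ x ∈ X with ¬ #{y ∈ Y | r x y} ≤ 2, #{y ∈ Y | r x y} ≤ #Y := by
    rw [← card_interedges_eq_sum_left, card_interedges_eq_sum_right]
    exact (sum_le_card_nsmul _ _ 1 heavy_neighbor).trans_eq (mul_one _)
  rw [card_interedges_eq_sum_left, ← sum_filter_add_sum_filter_not X
    (fun x => #{y ∈ Y | r x y} ≤ 2)]
  exact add_le_add light heavy

/-- The vertices of `X` at distance exactly two from `x₀` in the bipartite graph of `r` on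
`X` and `Y`. -/
def secondNeighbors [DecidableEq α] (r : α → β → Prop) [∀ a b, Decidable (r a b)]
    (X : Finset α) (Y : Finset β) (x₀ : α) : Finset α :=
  {x ∈ X | x ≠ x₀ ∧ ∃ y ∈ Y, r x₀ y ∧ r x y}

section SecondNeighbors

variable [DecidableEq α] {X : Finset α} {Y : Finset β} {x₀ : α}

lemma CycleFree.card_interedges_neighbors_le (hr : CycleFree 3 r) :
    #(Rel.interedges r (secondNeighbors r X Y x₀) {y ∈ Y | r x₀ y}) ≤
      2 * #(secondNeighbors r X Y x₀) + #{y ∈ Y | r x₀ y} := by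
  refine card_interedges_le_of_no_path fun x hx x' hx' y₁ hy₁ y₂ _ y₃ hy₃ hxx' h₁₂ h₁₃ h₂₃
    hxy₁ hxy₂ hx'y₂ hx'y₃ => ?_
  simp only [secondNeighbors, mem_filter] at hx hx' hy₁ hy₃
  exact hr.not_hexagon hx.2.1.symm hx'.2.1.symm hxx' h₁₂ h₁₃ h₂₃ hy₁.2 hxy₁ hxy₂ hx'y₂ hx'y₃ hy₃.2

lemma CycleFree.card_interedges_nonneighbors_le (hr : CycleFree 3 r) :
    #(Rel.interedges r (secondNeighbors r X Y x₀) {y ∈ Y | ¬ r x₀ y}) ≤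
      2 * #Y + #(secondNeighbors r X Y x₀) := by
  have parent_eq : ∀ x ∈ secondNeighbors r X Y x₀, ∀ x' ∈ secondNeighbors r X Y x₀, x ≠ x' →
      ∀ y, ¬ r x₀ y → r x y → r x' y → ∀ p p', r x₀ p → r x p → r x₀ p' → r x' p' → p = p' := by
    intro x hx x' hx' hxx' y hy hxy hx'y p p' hp hxp hp' hx'p'
    simp only [secondNeighbors, mem_filter] at hx hx'
    by_contra hpp'
    exact hr.not_hexagon hx.2.1.symm hx'.2.1.symm hxx' (by rintro rfl; exact hy hp) hpp'
      (by rintro rfl; exact hy hp') hp hxp hxy hx'y hx'p' hp'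
  have h := card_interedges_le_of_no_path (r := Function.swap r) (X := {y ∈ Y | ¬ r x₀ y})
    (Y := secondNeighbors r X Y x₀) <| by
    intro y hy y' hy' x₁ hx₁ x₂ hx₂ x₃ hx₃ hyy' h₁₂ h₁₃ h₂₃ h₁ h₂ h₂' h₃
    simp only [Function.swap, mem_filter] at hy hy' h₁ h₂ h₂' h₃
    obtain ⟨⟨-, -, p₁, -, hp₁, hx₁p₁⟩, ⟨-, -, p₂, -, hp₂, hx₂p₂⟩, -, -, p₃, -, hp₃, hx₃p₃⟩ :
      _ ∧ _ ∧ _ := ⟨mem_filter.1 hx₁, mem_filter.1 hx₂, mem_filter.1 hx₃⟩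
    obtain rfl := parent_eq x₁ hx₁ x₂ hx₂ h₁₂ y hy.2 h₁ h₂ p₁ p₂ hp₁ hx₁p₁ hp₂ hx₂p₂
    obtain rfl := parent_eq x₂ hx₂ x₃ hx₃ h₂₃ y' hy'.2 h₂' h₃ p₁ p₃ hp₂ hx₂p₂ hp₃ hx₃p₃
    exact hr.not_hexagon h₁₂ h₁₃ h₂₃ hyy' (by rintro rfl; exact hy.2 hp₁)
      (by rintro rfl; exact hy'.2 hp₁) h₁ h₂ h₂' h₃ hx₃p₃ hx₁p₁
  rw [card_interedges_eq_sum_left, ← card_interedges_eq_sum_right] at h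
  exact h.trans (by gcongr; exact filter_subset _ _)

lemma card_neighbors_mul_le_card_interedges {b : ℝ} (hb : ∀ y ∈ Y, b ≤ #{x ∈ X | r x y}) :
    #{y ∈ Y | r x₀ y} * (b - 1) ≤
      #(Rel.interedges r (secondNeighbors r X Y x₀) {y ∈ Y | r x₀ y}) := by
  rw [card_interedges_eq_sum_right, Nat.cast_sum, ← nsmul_eq_mul]
  refine card_nsmul_le_sum _ _ _ fun y hy => ?_
  obtain ⟨hyY, hy⟩ := mem_filter.1 hy
  have hsub : ({x ∈ X | r x y}).erase x₀ ⊆ {x ∈ secondNeighbors r X Y x₀ | r x y} := by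
    intro x hx
    simp only [mem_erase, mem_filter, secondNeighbors] at hx ⊢
    exact ⟨⟨hx.2.1, hx.1, y, hyY, hy, hx.2.2⟩, hx.2.2⟩
  have hcard : #{x ∈ X | r x y} ≤ #{x ∈ secondNeighbors r X Y x₀ | r x y} + 1 :=
    (Nat.sub_le_iff_le_add.1 pred_card_le_card_erase).trans (by gcongr)
  have : (#{x ∈ X | r x y} : ℝ) ≤ #{x ∈ secondNeighbors r X Y x₀ | r x y} + 1 := mod_cast hcard
  linarith [hb y hyY]

end SecondNeighbors

lemma CycleFree.sq_minDegree_mul_le (hr : CycleFree 3 r) {X : Finset α} {Y : Finset β}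
    (hne : X.Nonempty) {a b : ℝ} (ha : 8 ≤ a) (hb : 8 ≤ b)
    (hX : ∀ x ∈ X, a ≤ #{y ∈ Y | r x y}) (hY : ∀ y ∈ Y, b ≤ #{x ∈ X | r x y}) :
    a ^ 2 * b ≤ 16 * #Y := by
  classical
  obtain ⟨x₀, hx₀⟩ := hne
  set N₁ : Finset β := {y ∈ Y | r x₀ y} with hN₁
  set N₂ := secondNeighbors r X Y x₀
  have inner : (#(Rel.interedges r N₂ N₁) : ℝ) ≤ 2 * #N₂ + #N₁ := by
    exact_mod_cast hr.card_interedges_neighbors_le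
  have outer : (#(Rel.interedges r N₂ {y ∈ Y | ¬ r x₀ y}) : ℝ) ≤ 2 * #Y + #N₂ := by
    exact_mod_cast hr.card_interedges_nonneighbors_le
  have split : (#(Rel.interedges r N₂ Y) : ℝ) =
      #(Rel.interedges r N₂ N₁) + #(Rel.interedges r N₂ {y ∈ Y | ¬ r x₀ y}) := by
    simp only [card_interedges_eq_sum_right, hN₁]
    exact_mod_cast (sum_filter_add_sum_filter_not Y _ _).symm
  have lower₁ : #N₁ * (b - 1) ≤ #(Rel.interedges r N₂ N₁) :=
    card_neighbors_mul_le_card_interedges hY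
  have lower₂ : #N₂ * a ≤ #(Rel.interedges r N₂ Y) := by
    rw [card_interedges_eq_sum_left, Nat.cast_sum, ← nsmul_eq_mul]
    exact card_nsmul_le_sum _ _ _ fun x hx => hX x (mem_filter.1 hx).1
  have degree : a ≤ #N₁ := hX x₀ hx₀
  have size : #N₁ * (b - 2) ≤ 2 * #N₂ := by linarith
  have lower : a * (b * (3 / 8)) ≤ #N₂ := by nlinarith only [size, degree, ha, hb]
  have upper : #N₂ * (a * (7 / 12)) ≤ 2 * #Y := by
    nlinarith only [size, inner, outer, split, lower₂, ha, hb]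
  have := mul_le_mul_of_nonneg_right lower (by positivity : 0 ≤ a * (7 / 12))
  linarith

lemma exists_subsets_minDegree {X : Finset α} {Y : Finset β} {a b : ℝ} (ha : 0 ≤ a) (hb : 0 ≤ b)
    (h : a * #X + b * #Y < #(Rel.interedges r X Y)) :
    ∃ X' ⊆ X, ∃ Y' ⊆ Y, X'.Nonempty ∧ Y'.Nonempty ∧
      (∀ x ∈ X', a ≤ #{y ∈ Y' | r x y}) ∧ ∀ y ∈ Y', b ≤ #{x ∈ X' | r x y} := by
  classical
  set surplus : Finset α × Finset β → ℝ := fun P =>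
    #(Rel.interedges r P.1 P.2) - a * #P.1 - b * #P.2 with hsurplus
  obtain ⟨⟨X', Y'⟩, hmem, hmax⟩ :=
    exists_max_image (X.powerset ×ˢ Y.powerset) surplus ⟨(X, Y), by simp⟩
  simp only [mem_product, mem_powerset] at hmem
  have pos : 0 < surplus (X', Y') :=
    (by simp only [hsurplus]; linarith : 0 < surplus (X, Y)).trans_le (hmax (X, Y) (by simp))
  refine ⟨X', hmem.1, Y', hmem.2, ?_, ?_, fun x hx => ?_, fun y hy => ?_⟩
  · rw [nonempty_iff_ne_empty]
    rintro rfl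
    simp only [hsurplus, card_interedges_eq_sum_left, sum_empty, card_empty, Nat.cast_zero,
      mul_zero] at pos
    nlinarith [mul_nonneg hb (Nat.cast_nonneg (α := ℝ) #Y')]
  · rw [nonempty_iff_ne_empty]
    rintro rfl
    simp only [hsurplus, card_interedges_eq_sum_right, sum_empty, card_empty, Nat.cast_zero,
      mul_zero] at pos
    nlinarith [mul_nonneg ha (Nat.cast_nonneg (α := ℝ) #X')]
  · have := hmax (X'.erase x, Y') (by simp [(erase_subset x X').trans hmem.1, hmem.2])
    simp only [hsurplus, card_interedges_eq_sum_left, ← add_sum_erase _ _ hx,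
      ← card_erase_add_one hx] at this
    push_cast at this
    linarith
  · have := hmax (X', Y'.erase y) (by simp [(erase_subset y Y').trans hmem.2, hmem.1])
    simp only [hsurplus, card_interedges_eq_sum_right, ← add_sum_erase _ _ hy,
      ← card_erase_add_one hy] at this
    push_cast at this
    linarith

lemma CycleFree.card_interedges_three_pow_six_le (hr : CycleFree 3 r) {X : Finset α}
    {Y : Finset β} (hX : X.Nonempty) (hY : Y.Nonempty)
    (large : (24 * #X + 24 * #Y : ℝ) < #(Rel.interedges r X Y)) :
    (#(Rel.interedges r X Y) : ℝ) ^ 6 ≤ 186624 * (#X * #Y : ℝ) ^ 4 := by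
  set e : ℝ := Nat.cast #(Rel.interedges r X Y)
  have hX₀ : 0 < (#X : ℝ) := mod_cast hX.card_pos
  have hY₀ : 0 < (#Y : ℝ) := mod_cast hY.card_pos
  set a : ℝ := e / (3 * #X)
  set b : ℝ := e / (3 * #Y)
  have ha : 8 ≤ a := by rw [le_div_iff₀ (by positivity)]; linarith
  have hb : 8 ≤ b := by rw [le_div_iff₀ (by positivity)]; linarith
  have haX : a * #X = e / 3 := by simp only [a]; field_simp
  have hbY : b * #Y = e / 3 := by simp only [b]; field_simp
  obtain ⟨X', hX'X, Y', hY'Y, hX', hY', hdegX, hdegY⟩ :=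
    exists_subsets_minDegree (r := r) (X := X) (Y := Y) (a := a) (b := b)
      (by linarith) (by linarith) (by rw [haX, hbY]; linarith)
  have boundY : a ^ 2 * b ≤ 16 * #Y := (hr.sq_minDegree_mul_le hX' ha hb hdegX hdegY).trans
    (by gcongr)
  have boundX : b ^ 2 * a ≤ 16 * #X := (hr.swap.sq_minDegree_mul_le hY' hb ha hdegY hdegX).trans
    (by gcongr)
  calc e ^ 6 = 729 * ((a * #X) * (b * #Y)) ^ 3 := by rw [haX, hbY]; ring
    _ = 729 * (a ^ 2 * b * (b ^ 2 * a) * (#X * #Y : ℝ) ^ 3) := by ring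
    _ ≤ 729 * (16 * #Y * (16 * #X) * (#X * #Y : ℝ) ^ 3) := by gcongr
    _ = 186624 * (#X * #Y : ℝ) ^ 4 := by ring

lemma CycleFree.card_interedges_three_le_rpow (hr : CycleFree 3 r) (X : Finset α) (Y : Finset β) :
    (#(Rel.interedges r X Y) : ℝ) ≤
      8 * (#X * #Y : ℝ) ^ ((2 : ℝ) / 3) + 24 * #X + 24 * #Y := by
  by_contra! large
  have hpow : 0 ≤ (#X * #Y : ℝ) ^ ((2 : ℝ) / 3) := by positivity
  have edges : (Rel.interedges r X Y).Nonempty := by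
    rw [nonempty_iff_ne_empty]
    intro h
    rw [h, card_empty, Nat.cast_zero] at large
    exact large.not_ge (by positivity)
  obtain ⟨⟨x, y⟩, hxy⟩ := edges
  rw [Rel.mk_mem_interedges_iff] at hxy
  have dense := hr.card_interedges_three_pow_six_le ⟨x, hxy.1⟩ ⟨y, hxy.2.1⟩ (by linarith)
  have lower : (8 * (#X * #Y : ℝ) ^ ((2 : ℝ) / 3)) ^ 6 < (#(Rel.interedges r X Y) : ℝ) ^ 6 := by
    gcongr
    linarith [Nat.cast_nonneg (α := ℝ) #X, Nat.cast_nonneg (α := ℝ) #Y]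
  rw [mul_pow 8, ← Real.rpow_mul_natCast (by positivity)] at lower
  norm_num only [Real.rpow_ofNat] at lower
  have : (0 : ℝ) ≤ (#X * #Y : ℝ) ^ 4 := by positivity
  linarith

end BipartiteGraphs

section SidonSets

variable {k : ℕ} {A B : Finset ℕ}

lemma MulSidonK.mono (hA : MulSidonK k A) (hBA : B ⊆ A) : MulSidonK k B :=
  fun ⟨s, t, hs, ht, hst⟩ => hA ⟨s, t, fun i => hBA (hs i), fun i => hBA (ht i), hst⟩

lemma MulSidonK.prod_ne_prod (hA : MulSidonK k A) {ι : Type*} [Fintype ι]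
    (hι : Fintype.card ι = k) {s t : ι → ℕ} (hs : ∀ i, s i ∈ A) (ht : ∀ i, t i ∈ A)
    (hst : Function.Injective (Sum.elim s t)) : ∏ i, s i ≠ ∏ i, t i := by
  intro heq
  let e := (Fintype.equivFinOfCardEq hι).symm
  refine hA ⟨s ∘ e, t ∘ e, fun i => hs (e i), fun i => ht (e i), ?_, ?_⟩
  · rw [← Sum.elim_comp_map]
    exact hst.comp (e.injective.sumMap e.injective)
  · simpa only [Function.comp_apply, e.prod_comp] using heq

lemma MulSidonK.or_exists_sdiff {l : ℕ} (hA : MulSidonK (k + l) A) :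
    MulSidonK l A ∨ ∃ Q : Finset ℕ, #Q ≤ 2 * l ∧ MulSidonK k (A \ Q) := by
  refine or_iff_not_imp_left.2 fun hl => ?_
  obtain ⟨s, t, hs, ht, hst, hprod⟩ := not_not.1 hl
  have notMem_of_sdiff : ∀ {a}, a ∈ A \ univ.image (Sum.elim s t) →
      (∀ i, a ≠ s i) ∧ ∀ i, a ≠ t i := by
    intro a ha
    simp only [mem_sdiff, mem_image, mem_univ, true_and, Sum.exists, not_or, not_exists,
      Sum.elim_inl, Sum.elim_inr] at ha
    exact ⟨fun i h => ha.2.1 i h.symm, fun i h => ha.2.2 i h.symm⟩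
  refine ⟨univ.image (Sum.elim s t), card_image_le.trans (by simp [two_mul]), ?_⟩
  rintro ⟨s', t', hs', ht', hst', hprod'⟩
  refine hA.prod_ne_prod (by simp) (s := Sum.elim s' s) (t := Sum.elim t' t) ?_ ?_ ?_ ?_
  · exact Sum.forall.2 ⟨fun i => (mem_sdiff.1 (hs' i)).1, hs⟩
  · exact Sum.forall.2 ⟨fun i => (mem_sdiff.1 (ht' i)).1, ht⟩
  · rw [Sum.elim_injective] at hst hst' ⊢
    refine ⟨hst'.1.sumElim hst.1 fun i => (notMem_of_sdiff (hs' i)).1,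
      hst'.2.1.sumElim hst.2.1 fun i => (notMem_of_sdiff (ht' i)).2, ?_⟩
    rintro (i | i) (j | j)
    · exact hst'.2.2 i j
    · exact (notMem_of_sdiff (hs' i)).2 j
    · exact ((notMem_of_sdiff (ht' j)).1 i).symm
    · exact hst.2.2 i j
  · rw [Fintype.prod_sum_type, Fintype.prod_sum_type]
    exact congrArg₂ (· * ·) hprod' hprod

lemma MulSidonK.card_le_of_card_le {l n : ℕ} {M : ℝ}
    (hbase : ∀ A ⊆ Icc 1 n, MulSidonK k A → (#A : ℝ) ≤ M)
    (hstep : ∀ A ⊆ Icc 1 n, MulSidonK l A → (#A : ℝ) ≤ M) (j : ℕ) :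
    ∀ A ⊆ Icc 1 n, MulSidonK (k + j * l) A → (#A : ℝ) ≤ M + 2 * l * j := by
  induction j with
  | zero => simpa using hbase
  | succ j ih =>
    intro A hA hAk
    rw [Nat.succ_mul, ← add_assoc] at hAk
    push_cast
    obtain hl | ⟨Q, hQ, hAQ⟩ := hAk.or_exists_sdiff
    · exact (hstep A hA hl).trans (le_add_of_nonneg_right (by positivity))
    · have hrest := ih (A \ Q) (sdiff_subset.trans hA) hAQ
      have hcard : #A ≤ #(A \ Q) + 2 * l := by have := le_card_sdiff Q A; omega
      have : (#A : ℝ) ≤ #(A \ Q) + 2 * l := mod_cast hcard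
      linarith

lemma MulSidonK.exists_cycleFree [NeZero k] (hk : k ≠ 1) (hA : MulSidonK k A) {X Y : Finset ℕ}
    (hXY : ∀ a ∈ A, ∃ x ∈ X, ∃ y ∈ Y, x * y = a) :
    ∃ (r : ℕ → ℕ → Prop) (_ : ∀ x y, Decidable (r x y)),
      CycleFree k r ∧ #A = #(Rel.interedges r X Y) := by
  classical
  choose! x hx y hy hxy using hXY
  let r : ℕ → ℕ → Prop := fun u v => u * v ∈ A ∧ x (u * v) = u ∧ y (u * v) = v
  refine ⟨r, inferInstance, ?_, ?_⟩
  · rintro ⟨u, v, hu, hv, hr⟩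
    have edge_inj : ∀ {u v u' v'}, r u v → r u' v' → u * v = u' * v' → u = u' ∧ v = v' :=
      fun h h' heq => ⟨h.2.1.symm.trans (heq ▸ h'.2.1), h.2.2.symm.trans (heq ▸ h'.2.2)⟩
    refine hA ⟨fun i => u i * v i, fun i => u (i + 1) * v i, fun i => (hr i).1.1,
      fun i => (hr i).2.1, ?_, ?_⟩
    · refine Function.Injective.sumElim ?_ ?_ ?_
      · exact fun i j hij => hu (edge_inj (hr i).1 (hr j).1 hij).1
      · exact fun i j hij => hv (edge_inj (hr i).2 (hr j).2 hij).2
      · intro i j hij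
        obtain ⟨huij, hvij⟩ := edge_inj (hr i).1 (hr j).2 hij
        have hj : j = j + 1 := hu (hv hvij ▸ huij)
        have one_eq_zero : (1 : Fin k) = 0 := left_eq_add.1 hj
        exact hk (Nat.dvd_one.1 (Nat.dvd_of_mod_eq_zero (congrArg Fin.val one_eq_zero)))
    · rw [prod_mul_distrib, prod_mul_distrib]
      congr 1
      exact (Equiv.prod_comp (Equiv.addRight (1 : Fin k)) u).symm
  · refine card_bij (fun a _ => (x a, y a)) (fun a ha => ?_) (fun a ha b hb hab => ?_) ?_
    · rw [Rel.mk_mem_interedges_iff]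
      simp only [r, hxy a ha]
      exact ⟨hx a ha, hy a ha, ha, trivial, trivial⟩
    · rw [← hxy a ha, ← hxy b hb, (Prod.mk.inj hab).1, (Prod.mk.inj hab).2]
    · rintro ⟨u, v⟩ huv
      rw [Rel.mk_mem_interedges_iff] at huv
      exact ⟨u * v, huv.2.2.1, Prod.ext huv.2.2.2.1 huv.2.2.2.2⟩

end SidonSets

section Divisors

lemma exists_prime_step {P : ℕ → Prop} (h₁ : ¬ P 1) {m : ℕ} (hm₀ : m ≠ 0) (hm : P m) :
    ∃ d q, q.Prime ∧ d * q ∣ m ∧ ¬ P d ∧ P (d * q) := by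
  induction m using Nat.strong_induction_on with
  | _ m ih =>
    have hm₁ : m ≠ 1 := by rintro rfl; exact h₁ hm
    have hq : m.minFac.Prime := Nat.minFac_prime hm₁
    obtain ⟨d, hd⟩ : m.minFac ∣ m := m.minFac_dvd
    rw [mul_comm] at hd
    by_cases hPd : P d
    · have hd₀ : d ≠ 0 := by rintro rfl; simp [hm₀] at hd
      have hdm : d < m := by
        conv_rhs => rw [hd]
        exact lt_mul_right (Nat.pos_of_ne_zero hd₀) hq.one_lt
      obtain ⟨e, q, hq, heq, hPe⟩ := ih d hdm hd₀ hPd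
      exact ⟨e, q, hq, heq.trans (hd ▸ dvd_mul_right d _), hPe⟩
    · exact ⟨d, m.minFac, hq, hd ▸ dvd_rfl, hPd, hd ▸ hm⟩

lemma exists_dvd_cube_between {n r : ℕ} (hn : 2 ≤ n) (hr : n ≤ r ^ 3)
    (hp : ∀ p, p.Prime → p ∣ r → p ^ 3 ≤ n ^ 2) : ∃ w, w ∣ r ∧ n ≤ w ^ 3 ∧ w ^ 3 ≤ n ^ 2 := by
  by_cases large : ∃ p, p.Prime ∧ p ∣ r ∧ n ≤ p ^ 3
  · obtain ⟨p, hpp, hpr, hnp⟩ := large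
    exact ⟨p, hpr, hnp, hp p hpp hpr⟩
  · push Not at large
    have hr₀ : r ≠ 0 := by rintro rfl; omega
    obtain ⟨d, q, hq, hdq, hd, hw⟩ :=
      exists_prime_step (P := fun w => n ≤ w ^ 3) (by simp; omega) hr₀ hr
    refine ⟨d * q, hdq, hw, ?_⟩
    rw [mul_pow, sq]
    exact Nat.mul_le_mul (not_le.1 hd).le (large q hq (dvd_of_mul_left_dvd hdq)).le

lemma exists_mul_eq_sq_le_cube_le {n a : ℕ} (ha₀ : 0 < a) (ha : a ≤ n)
    (hp : ∀ p, p.Prime → p ∣ a → p ^ 3 ≤ n ^ 2) :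
    ∃ u v, u * v = a ∧ u ^ 2 ≤ n ∧ v ^ 3 ≤ n ^ 2 := by
  obtain h | h := le_or_gt (a ^ 3) n
  · exact ⟨a, 1, mul_one a, (Nat.pow_le_pow_right ha₀ (by norm_num)).trans h, by nlinarith⟩
  have hn : 2 ≤ n := by
    by_contra! hn
    obtain rfl : a = 1 := by omega
    omega
  obtain ⟨w, ⟨w', rfl⟩, hnw, hwn⟩ := exists_dvd_cube_between hn h.le hp
  obtain hw | hw := le_or_gt (w ^ 2) n
  · refine ⟨w, w', rfl, hw, Nat.le_of_mul_le_mul_left ?_ (by omega : 0 < n)⟩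
    calc n * w' ^ 3 ≤ w ^ 3 * w' ^ 3 := by gcongr
      _ = (w * w') ^ 3 := by ring
      _ ≤ n ^ 3 := by gcongr
      _ = n * n ^ 2 := by ring
  · refine ⟨w', w, mul_comm _ _, Nat.le_of_mul_le_mul_left ?_ (by omega : 0 < n), hwn⟩
    calc n * w' ^ 2 ≤ w ^ 2 * w' ^ 2 := by gcongr
      _ = (w * w') ^ 2 := by ring
      _ ≤ n ^ 2 := by gcongr
      _ = n * n := by ring

/-- `w` is `z`-rough: it has no prime factor below `z`. -/
def IsRough (z w : ℕ) : Prop :=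
  ∀ p < z, p.Prime → ¬ p ∣ w

instance (z : ℕ) : DecidablePred (IsRough z) := fun w =>
  inferInstanceAs (Decidable (∀ p < z, p.Prime → ¬ p ∣ w))

lemma IsRough.of_dvd {z w d : ℕ} (hw : IsRough z w) (hd : d ∣ w) : IsRough z d :=
  fun p hpz hp hpd => hw p hpz hp (hpd.trans hd)

lemma IsRough.coprime_of_lt {z w s : ℕ} (hw : IsRough z w) (hs₀ : 0 < s) (hs : s < z) :
    w.Coprime s :=
  Nat.Coprime.symm <| Nat.coprime_of_dvd fun p hp hps =>
    hw p ((Nat.le_of_dvd hs₀ hps).trans_lt hs) hp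

lemma exists_isRough_mul_smooth (z : ℕ) {a : ℕ} (ha : a ≠ 0) :
    ∃ r s, r * s = a ∧ IsRough z r ∧ ∀ p, p.Prime → p ∣ s → p < z := by
  induction a using induction_on_primes with
  | zero => exact absurd rfl ha
  | one => exact ⟨1, 1, rfl, fun p _ hp h => hp.one_lt.ne' (Nat.dvd_one.1 h),
      fun p hp h => absurd (Nat.dvd_one.1 h) hp.one_lt.ne'⟩
  | prime_mul q b hq ih =>
    obtain ⟨r, s, rfl, hr, hs⟩ := ih (right_ne_zero_of_mul ha)
    obtain hqz | hqz := lt_or_ge q z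
    · refine ⟨r, q * s, by ring, hr, fun p hp hps => ?_⟩
      obtain h | h := hp.dvd_mul.1 hps
      · exact (Nat.prime_dvd_prime_iff_eq hp hq).1 h ▸ hqz
      · exact hs p hp h
    · refine ⟨q * r, s, by ring, fun p hpz hp hpr => ?_, hs⟩
      obtain h | h := hp.dvd_mul.1 hpr
      · exact hpz.not_ge ((Nat.prime_dvd_prime_iff_eq hp hq).1 h ▸ hqz)
      · exact hr p hpz hp h

lemma exists_dvd_isRough_or_sq_between {n a : ℕ} (z : ℕ) (hn : 2 ≤ n) (ha : n ≤ a ^ 2)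
    (hp : ∀ p, p.Prime → p ∣ a → p ^ 3 ≤ n ^ 2) :
    (∃ w, w ∣ a ∧ IsRough z w ∧ n ≤ w ^ 3 ∧ w ^ 3 ≤ n ^ 2) ∨
      ∃ w, w ∣ a ∧ n ≤ w ^ 2 ∧ w ^ 2 ≤ n * z ^ 2 := by
  have ha₀ : a ≠ 0 := by rintro rfl; simp at ha; omega
  obtain ⟨r, s, rfl, hr, hs⟩ := exists_isRough_mul_smooth z ha₀
  obtain h | h := le_or_gt n (r ^ 3)
  · obtain ⟨w, hwr, hw⟩ := exists_dvd_cube_between hn h fun p hpp hpr => hp p hpp (hpr.mul_right s)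
    exact .inl ⟨w, hwr.mul_right s, hr.of_dvd hwr, hw⟩
  · have hr₀ : 0 < r := Nat.pos_of_ne_zero (left_ne_zero_of_mul ha₀)
    have hrn : r ^ 2 < n := (Nat.pow_le_pow_right hr₀ (by norm_num)).trans_lt h
    obtain ⟨d, q, hq, hdq, hd, hw⟩ := exists_prime_step (P := fun w => n ≤ (r * w) ^ 2)
      (by simpa using hrn) (right_ne_zero_of_mul ha₀) ha
    refine .inr ⟨r * (d * q), mul_dvd_mul_left r hdq, hw, ?_⟩
    rw [← mul_assoc, mul_pow _ q]
    have hqz : q < z := hs q hq (dvd_of_mul_left_dvd hdq)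
    exact Nat.mul_le_mul (not_le.1 hd).le (Nat.pow_le_pow_left hqz.le 2)

lemma sum_inv_isRough_mul_log_le {z : ℕ} (hz : 0 < z) (x : ℕ) :
    (∑ w ∈ Icc 1 x with IsRough z w, (w : ℝ)⁻¹) * Real.log z ≤ 1 + Real.log (x * z : ℕ) := by
  have log_le : Real.log z ≤ ∑ s ∈ Icc 1 (z - 1), (s : ℝ)⁻¹ := by
    have := log_add_one_le_harmonic (z - 1)
    rw [harmonic_eq_sum_Icc, Nat.sub_add_cancel hz] at this
    push_cast at this
    exact this
  have inj : Set.InjOn (fun p : ℕ × ℕ => p.1 * p.2)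
      ({w ∈ Icc 1 x | IsRough z w} ×ˢ Icc 1 (z - 1) : Finset (ℕ × ℕ)) := by
    rintro ⟨w, s⟩ h ⟨w', s'⟩ h' heq
    simp only [mem_coe, mem_product, mem_filter, mem_Icc] at h h' heq
    obtain rfl : w = w' := Nat.dvd_antisymm
      ((h.1.2.coprime_of_lt h'.2.1 (by omega)).dvd_of_dvd_mul_right (heq ▸ dvd_mul_right w s))
      ((h'.1.2.coprime_of_lt h.2.1 (by omega)).dvd_of_dvd_mul_right (heq ▸ dvd_mul_right w' s'))
    rw [Nat.eq_of_mul_eq_mul_left h.1.1.1 heq]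
  calc (∑ w ∈ Icc 1 x with IsRough z w, (w : ℝ)⁻¹) * Real.log z
      ≤ (∑ w ∈ Icc 1 x with IsRough z w, (w : ℝ)⁻¹) * ∑ s ∈ Icc 1 (z - 1), (s : ℝ)⁻¹ := by
        gcongr
    _ = ∑ a ∈ ({w ∈ Icc 1 x | IsRough z w} ×ˢ Icc 1 (z - 1)).image
          (fun p : ℕ × ℕ => p.1 * p.2), (a : ℝ)⁻¹ := by
        rw [sum_image inj, sum_mul_sum, sum_product]
        simp only [Nat.cast_mul, mul_inv]
    _ ≤ ∑ a ∈ Icc 1 (x * z), (a : ℝ)⁻¹ := by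
        refine sum_le_sum_of_subset_of_nonneg (image_subset_iff.2 fun p hp => ?_)
          fun _ _ _ => by positivity
        simp only [mem_product, mem_filter, mem_Icc] at hp ⊢
        exact ⟨Nat.mul_pos hp.1.1.1 hp.2.1, Nat.mul_le_mul hp.1.1.2 (by omega)⟩
    _ ≤ 1 + Real.log (x * z : ℕ) := by
        have := harmonic_le_one_add_log (x * z)
        rw [harmonic_eq_sum_Icc, Rat.cast_sum] at this
        simpa only [Rat.cast_inv, Rat.cast_natCast] using this

lemma sum_log_le_of_dvd_mem {R : Finset ℕ} {x : ℕ} (hR : R ⊆ Icc 1 x)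
    (hdvd : ∀ w ∈ R, ∀ d, d ∣ w → d ∈ R) :
    ∑ w ∈ R, Real.log w ≤ 6 * x * ∑ d ∈ R, (d : ℝ)⁻¹ := by
  have multiples : ∀ d ∈ R, ∑ w ∈ R with d ∣ w, ArithmeticFunction.vonMangoldt (w / d) ≤
      6 * (x * (d : ℝ)⁻¹) := by
    intro d hd
    have hd₀ : 0 < d := (mem_Icc.1 (hR hd)).1
    calc ∑ w ∈ R with d ∣ w, ArithmeticFunction.vonMangoldt (w / d)
        ≤ Chebyshev.psi (x / d : ℝ) := by
          have inj : Set.InjOn (· / d) ({w ∈ R | d ∣ w} : Finset ℕ) := fun w hw w' hw' h =>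
            (Nat.div_left_inj (mem_filter.1 hw).2 (mem_filter.1 hw').2).1 h
          rw [← sum_image (f := fun e => ArithmeticFunction.vonMangoldt e) inj, Chebyshev.psi,
            Nat.floor_div_eq_div]
          refine sum_le_sum_of_subset_of_nonneg (image_subset_iff.2 fun w hw => ?_)
            fun _ _ _ => ArithmeticFunction.vonMangoldt_nonneg
          obtain ⟨hwR, hdw⟩ := mem_filter.1 hw
          obtain ⟨hw₀, hwx⟩ := mem_Icc.1 (hR hwR)
          exact mem_Ioc.2 ⟨Nat.div_pos (Nat.le_of_dvd hw₀ hdw) hd₀, Nat.div_le_div_right hwx⟩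
      _ ≤ (Real.log 4 + 4) * (x / d) := Chebyshev.psi_le_const_mul_self (by positivity)
      _ ≤ 6 * (x * (d : ℝ)⁻¹) := by
          rw [div_eq_mul_inv]
          gcongr
          have : Real.log 4 = 2 * Real.log 2 := by
            rw [← Real.log_rpow two_pos]; norm_num
          linarith [Real.log_two_lt_d9]
  calc ∑ w ∈ R, Real.log w
      = ∑ w ∈ R, ∑ d ∈ R with d ∣ w, ArithmeticFunction.vonMangoldt (w / d) := by
        refine sum_congr rfl fun w hw => ?_
        have hw₀ : w ≠ 0 := Nat.one_le_iff_ne_zero.1 (mem_Icc.1 (hR hw)).1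
        rw [← ArithmeticFunction.vonMangoldt_sum, ← Nat.sum_div_divisors]
        refine sum_congr (ext fun d => ?_) fun _ _ => rfl
        simp only [Nat.mem_divisors, mem_filter]
        exact ⟨fun h => ⟨hdvd w hw d h.1, h.1⟩, fun h => ⟨h.2, hw₀⟩⟩
    _ = ∑ d ∈ R, ∑ w ∈ R with d ∣ w, ArithmeticFunction.vonMangoldt (w / d) := by
        simp only [sum_filter]
        exact sum_comm
    _ ≤ ∑ d ∈ R, 6 * (x * (d : ℝ)⁻¹) := sum_le_sum multiples
    _ = 6 * x * ∑ d ∈ R, (d : ℝ)⁻¹ := by rw [mul_sum]; simp only [mul_assoc]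

lemma card_isRough_mul_log_le {z x : ℕ} (hz : 2 ≤ z) (hzx : z ≤ x) :
    #{w ∈ Ico x (2 * x) | IsRough z w} * Real.log z ≤ 54 * x := by
  have hlog₂ : 0 < Real.log 2 := Real.log_pos one_lt_two
  have hz' : Real.log 2 ≤ Real.log z := Real.log_le_log two_pos (mod_cast hz)
  have hx' : Real.log z ≤ Real.log x := Real.log_le_log (by positivity) (mod_cast hzx)
  set R : Finset ℕ := {w ∈ Icc 1 (2 * x) | IsRough z w}
  have logs : #{w ∈ Ico x (2 * x) | IsRough z w} * Real.log x ≤ ∑ w ∈ R, Real.log w := by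
    rw [← nsmul_eq_mul]
    refine (card_nsmul_le_sum _ (fun w : ℕ => Real.log w) _ fun w hw => ?_).trans
      (sum_le_sum_of_subset_of_nonneg (filter_subset_filter _ fun w hw => ?_)
        fun w _ _ => Real.log_natCast_nonneg w)
    · exact Real.log_le_log (by norm_cast; omega)
        (mod_cast (mem_Ico.1 (mem_filter.1 hw).1).1)
    · rw [mem_Ico] at hw
      exact mem_Icc.2 ⟨by omega, hw.2.le⟩
  have recip := sum_log_le_of_dvd_mem (R := R) (x := 2 * x) (filter_subset _ _) <| by
    intro w hw d hd
    obtain ⟨hw, hwz⟩ := mem_filter.1 hw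
    obtain ⟨hw₀, hwx⟩ := mem_Icc.1 hw
    exact mem_filter.2 ⟨mem_Icc.2 ⟨Nat.pos_of_dvd_of_pos hd hw₀, (Nat.le_of_dvd hw₀ hd).trans hwx⟩,
      hwz.of_dvd hd⟩
  have hharm := sum_inv_isRough_mul_log_le (by omega : 0 < z) (2 * x)
  have hlog : 1 + Real.log (2 * x * z : ℕ) ≤ 9 / 2 * Real.log x := by
    have hz₀ : (z : ℝ) ≠ 0 := by norm_cast; omega
    have hx₀ : (x : ℝ) ≠ 0 := by norm_cast; omega
    push_cast
    rw [Real.log_mul (by positivity) hz₀, Real.log_mul two_ne_zero hx₀]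
    linarith [Real.log_two_gt_d9]
  refine le_of_mul_le_mul_right ?_ (hlog₂.trans_le (hz'.trans hx'))
  calc #{w ∈ Ico x (2 * x) | IsRough z w} * Real.log z * Real.log x
      = #{w ∈ Ico x (2 * x) | IsRough z w} * Real.log x * Real.log z := by ring
    _ ≤ 6 * (2 * x : ℕ) * (∑ w ∈ R, (w : ℝ)⁻¹) * Real.log z := by
        exact mul_le_mul_of_nonneg_right (logs.trans recip) (hlog₂.trans_le hz').le
    _ ≤ 6 * (2 * x : ℕ) * (9 / 2 * Real.log x) := by
        rw [mul_assoc]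
        exact mul_le_mul_of_nonneg_left (hharm.trans hlog) (by positivity)
    _ = 54 * x * Real.log x := by push_cast; ring

end Divisors

section Counting

variable {n : ℕ} {A B W : Finset ℕ} {T : ℝ}

lemma exists_prime_mul_le_cubeRoot (hT₀ : 0 ≤ T) (hT : T ^ 3 = n) {a : ℕ} (ha : a ∈ Icc 1 n)
    (hp : ∃ p, p.Prime ∧ p ∣ a ∧ n ^ 2 < p ^ 3) :
    ∃ p, p.Prime ∧ ∃ b ∈ Icc 1 ⌊T⌋₊, p * b = a := by
  obtain ⟨p, hpp, ⟨b, rfl⟩, hnp⟩ := hp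
  obtain ⟨hpb₀, hpb⟩ := mem_Icc.1 ha
  have hb₀ : 0 < b := Nat.pos_of_mul_pos_left hpb₀
  refine ⟨p, hpp, b, mem_Icc.2 ⟨hb₀, Nat.le_floor (le_of_pow_le_pow_left₀ three_ne_zero hT₀ ?_)⟩,
    rfl⟩
  rw [hT]
  norm_cast
  refine Nat.le_of_mul_le_mul_left ?_ (pow_pos (Nat.lt_of_lt_of_le hpb₀ hpb) 2)
  calc n ^ 2 * b ^ 3 ≤ p ^ 3 * b ^ 3 := by gcongr
    _ = (p * b) ^ 3 := by ring
    _ ≤ n ^ 3 := by gcongr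
    _ = n ^ 2 * n := by ring

lemma MulSidonK.card_two_le_of_exists_prime (hA : A ⊆ Icc 1 n) (hAk : MulSidonK 2 A)
    (hT₀ : 0 ≤ T) (hT : T ^ 3 = n) (hp : ∀ a ∈ A, ∃ p, p.Prime ∧ p ∣ a ∧ n ^ 2 < p ^ 3) :
    (#A : ℝ) ≤ n.primeCounting + T ^ 2 := by
  obtain ⟨r, _, hr, hcard⟩ := hAk.exists_cycleFree (by norm_num) (X := n.primesLE)
    (Y := Icc 1 ⌊T⌋₊) fun a ha => by
      obtain ⟨p, hpp, b, hb, rfl⟩ := exists_prime_mul_le_cubeRoot hT₀ hT (hA ha) (hp a ha)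
      have hpn : p ≤ n := (Nat.le_mul_of_pos_right p (mem_Icc.1 hb).1).trans (mem_Icc.1 (hA ha)).2
      exact ⟨p, Nat.mem_primesLE.2 ⟨hpn, hpp⟩, b, hb, rfl⟩
  have h := hr.card_interedges_two_le n.primesLE (Icc 1 ⌊T⌋₊)
  rw [← hcard, Nat.primesLE_card_eq_primeCounting, Nat.card_Icc, Nat.add_sub_cancel] at h
  calc (#A : ℝ) ≤ n.primeCounting + (⌊T⌋₊ : ℝ) ^ 2 := mod_cast h
    _ ≤ n.primeCounting + T ^ 2 := by gcongr; exact Nat.floor_le hT₀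

lemma MulSidonK.card_three_le_of_exists_prime (hA : A ⊆ Icc 1 n) (hAk : MulSidonK 3 A)
    (hT₀ : 0 ≤ T) (hT : T ^ 3 = n) (hp : ∀ a ∈ A, ∃ p, p.Prime ∧ p ∣ a ∧ n ^ 2 < p ^ 3) :
    (#A : ℝ) ≤ n.primeCounting + (n / 2).primeCounting + 2 * T ^ 2 := by
  set P : Finset ℕ := n.primesLE \ (n / 2).primesLE
  obtain ⟨r, _, hr, hcard⟩ := (hAk.mono (sdiff_subset (t := P))).exists_cycleFree (by norm_num)
    (X := (n / 2).primesLE) (Y := Icc 1 ⌊T⌋₊) fun a ha => by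
      obtain ⟨haA, haP⟩ := mem_sdiff.1 ha
      obtain ⟨p, hpp, b, hb, rfl⟩ := exists_prime_mul_le_cubeRoot hT₀ hT (hA haA) (hp a haA)
      refine ⟨p, Nat.mem_primesLE.2 ⟨?_, hpp⟩, b, hb, rfl⟩
      have hpb : p * b ≤ n := (mem_Icc.1 (hA haA)).2
      obtain rfl | hb₂ : b = 1 ∨ 2 ≤ b := by have := (mem_Icc.1 hb).1; omega
      · rw [mul_one] at haP hpb
        by_contra hlt
        exact haP (mem_sdiff.2 ⟨Nat.mem_primesLE.2 ⟨hpb, hpp⟩,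
          fun h => hlt (Nat.mem_primesLE.1 h).1⟩)
      · exact (Nat.le_div_iff_mul_le two_pos).2 ((Nat.mul_le_mul_left p hb₂).trans hpb)
  have h := hr.card_interedges_three_le (n / 2).primesLE (Icc 1 ⌊T⌋₊)
  rw [← hcard, Nat.primesLE_card_eq_primeCounting, Nat.card_Icc, Nat.add_sub_cancel] at h
  have hP : #P + (n / 2).primeCounting = n.primeCounting := by
    rw [← Nat.primesLE_card_eq_primeCounting, ← Nat.primesLE_card_eq_primeCounting]
    exact card_sdiff_add_card_eq_card (Nat.primesLE_mono (Nat.div_le_self n 2))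
  have hAP : #A ≤ #(A \ P) + #P := card_le_card_sdiff_add_card
  calc (#A : ℝ) ≤ n.primeCounting + (n / 2).primeCounting + 2 * (⌊T⌋₊ : ℝ) ^ 2 := by
        norm_cast; omega
    _ ≤ n.primeCounting + (n / 2).primeCounting + 2 * T ^ 2 := by
        gcongr; exact Nat.floor_le hT₀

lemma card_le_of_forall_le {x : ℝ} (hx : 0 ≤ x) (hA : ∀ a ∈ A, 0 < a ∧ (a : ℝ) ≤ x) :
    (#A : ℝ) ≤ x := by
  have hsub : A ⊆ Icc 1 ⌊x⌋₊ := fun a ha => mem_Icc.2 ⟨(hA a ha).1, Nat.le_floor (hA a ha).2⟩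
  calc (#A : ℝ) ≤ ⌊x⌋₊ := by exact_mod_cast (card_le_card hsub).trans (by simp)
    _ ≤ x := Nat.floor_le hx

lemma card_le_of_forall_sq_lt (hA : A ⊆ Icc 1 n) (hT₁ : 1 ≤ T) (hT : T ^ 3 = n)
    (hsq : ∀ a ∈ A, a ^ 2 < n) : (#A : ℝ) ≤ T ^ 2 := by
  refine card_le_of_forall_le (by positivity) fun a ha => ⟨(mem_Icc.1 (hA ha)).1,
    le_of_pow_le_pow_left₀ two_ne_zero (by positivity) ?_⟩
  calc (a : ℝ) ^ 2 ≤ n := mod_cast (hsq a ha).le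
    _ = T ^ 3 := hT.symm
    _ ≤ T ^ 4 := pow_le_pow_right₀ hT₁ (by norm_num)
    _ = (T ^ 2) ^ 2 := by ring

lemma MulSidonK.card_le_of_exists_dvd (hB : B ⊆ Icc 1 n) (hBk : MulSidonK 3 B) {L : ℕ}
    (hL : 0 < L) (hW : ∀ w ∈ W, L ≤ w) (hdvd : ∀ a ∈ B, ∃ w ∈ W, w ∣ a) :
    (#B : ℝ) ≤ 8 * (#W * (n / L) : ℝ) ^ ((2 : ℝ) / 3) + 24 * #W + 24 * (n / L) := by
  obtain ⟨r, _, hr, hcard⟩ := hBk.exists_cycleFree (by norm_num) (X := W)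
    (Y := Icc 1 (n / L)) fun a ha => by
      obtain ⟨w, hw, b, rfl⟩ := hdvd a ha
      obtain ⟨hwb₀, hwb⟩ := mem_Icc.1 (hB ha)
      refine ⟨w, hw, b, mem_Icc.2 ⟨Nat.pos_of_mul_pos_left hwb₀, ?_⟩, rfl⟩
      rw [Nat.le_div_iff_mul_le hL, mul_comm]
      exact (Nat.mul_le_mul_right b (hW w hw)).trans hwb
  have h := hr.card_interedges_three_le_rpow W (Icc 1 (n / L))
  rw [← hcard, Nat.card_Icc, Nat.add_sub_cancel] at h
  have hdiv : ((n / L : ℕ) : ℝ) ≤ n / L := Nat.cast_div_le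
  calc (#B : ℝ) ≤ _ := h
    _ ≤ _ := by gcongr

lemma MulSidonK.card_le_of_card_le_mul (hB : B ⊆ Icc 1 n) (hBk : MulSidonK 3 B) (hT₀ : 0 ≤ T)
    (hT : T ^ 3 = n) {L : ℕ} (hL : 0 < L) (hW : ∀ w ∈ W, L ≤ w) {δ : ℝ} (hδ : 0 ≤ δ)
    (hcard : (#W : ℝ) ≤ δ * L) (hdvd : ∀ a ∈ B, ∃ w ∈ W, w ∣ a) :
    (#B : ℝ) ≤ 8 * T ^ 2 * δ ^ ((2 : ℝ) / 3) + 24 * #W + 24 * (n * (L : ℝ)⁻¹) := by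
  have h := hBk.card_le_of_exists_dvd hB hL hW hdvd
  rw [div_eq_mul_inv (n : ℝ)] at h
  have hmain : ((#W : ℝ) * (n * (L : ℝ)⁻¹)) ^ ((2 : ℝ) / 3) ≤ T ^ 2 * δ ^ ((2 : ℝ) / 3) := by
    calc _ ≤ (δ * L * (T ^ 3 * (L : ℝ)⁻¹)) ^ ((2 : ℝ) / 3) := by rw [hT]; gcongr
      _ = (T ^ 3 * δ) ^ ((2 : ℝ) / 3) := by congr 1; field_simp
      _ = T ^ 2 * δ ^ ((2 : ℝ) / 3) := by
        rw [Real.mul_rpow (by positivity) hδ, ← Real.rpow_natCast_mul hT₀]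
        norm_num
  linarith

lemma sum_inv_two_pow_le {S : Finset ℕ} {c : ℝ} (hc : 0 < c) (hS : ∀ i ∈ S, c ≤ 2 ^ i) :
    ∑ i ∈ S, ((2 : ℝ) ^ i)⁻¹ ≤ 2 / c := by
  obtain rfl | hne := S.eq_empty_or_nonempty
  · rw [sum_empty]; positivity
  have hsub : S ⊆ Ico (S.min' hne) (S.max' hne + 1) := fun i hi =>
    mem_Ico.2 ⟨S.min'_le i hi, Nat.lt_succ_of_le (S.le_max' i hi)⟩
  calc ∑ i ∈ S, ((2 : ℝ) ^ i)⁻¹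
      ≤ ∑ i ∈ Ico (S.min' hne) (S.max' hne + 1), ((2 : ℝ)⁻¹) ^ i := by
        simp only [inv_pow]
        exact sum_le_sum_of_subset_of_nonneg hsub fun _ _ _ => by positivity
    _ ≤ (2 : ℝ)⁻¹ ^ S.min' hne / (1 - 2⁻¹) :=
        geom_sum_Ico_le_of_lt_one (by norm_num) (by norm_num)
    _ = 2 / 2 ^ S.min' hne := by rw [inv_pow]; ring
    _ ≤ 2 / c := by gcongr; exact hS _ (S.min'_mem hne)

lemma sum_image_log_inv_two_pow_le (hT₀ : 0 < T) (hW : ∀ w ∈ W, T ≤ w) :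
    ∑ i ∈ W.image (Nat.log 2), ((2 : ℝ) ^ i)⁻¹ ≤ 4 / T := by
  refine (sum_inv_two_pow_le (half_pos hT₀) fun i hi => ?_).trans_eq (by field_simp; norm_num)
  obtain ⟨w, hw, rfl⟩ := mem_image.1 hi
  have : (w : ℝ) < 2 ^ (Nat.log 2 w + 1) := mod_cast Nat.lt_pow_succ_log_self one_lt_two w
  linarith [hW w hw, pow_succ (2 : ℝ) (Nat.log 2 w)]

lemma MulSidonK.card_le_of_card_log_eq_le (hB : B ⊆ Icc 1 n) (hBk : MulSidonK 3 B) (hT₁ : 1 ≤ T)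
    (hT : T ^ 3 = n) (hW : ∀ w ∈ W, T ≤ w ∧ w ≤ T ^ 2) {δ : ℝ} (hδ : 0 ≤ δ)
    (hcell : ∀ i, (#{w ∈ W | Nat.log 2 w = i} : ℝ) ≤ δ * 2 ^ i)
    (hdvd : ∀ a ∈ B, ∃ w ∈ W, w ∣ a) :
    (#B : ℝ) ≤ #(W.image (Nat.log 2)) * (8 * T ^ 2 * δ ^ ((2 : ℝ) / 3)) + 120 * T ^ 2 := by
  choose! f hfW hfa using hdvd
  set S := W.image (Nat.log 2)
  have hT₀ : 0 < T := by positivity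
  have hw₀ : ∀ w ∈ W, 0 < w := fun w hw => mod_cast hT₀.trans_le (hW w hw).1
  have scale : ∀ i, (#{a ∈ B | Nat.log 2 (f a) = i} : ℝ) ≤ 8 * T ^ 2 * δ ^ ((2 : ℝ) / 3) +
      24 * #{w ∈ W | Nat.log 2 w = i} + 24 * (n * ((2 : ℝ) ^ i)⁻¹) := by
    intro i
    have hsub : {a ∈ B | Nat.log 2 (f a) = i} ⊆ B := filter_subset _ _
    have hpow : ∀ w ∈ W.filter (Nat.log 2 · = i), 2 ^ i ≤ w := fun w hw =>
      (mem_filter.1 hw).2 ▸ Nat.pow_log_le_self 2 (hw₀ w (mem_filter.1 hw).1).ne'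
    have h := (hBk.mono hsub).card_le_of_card_le_mul (hsub.trans hB) hT₀.le hT (by positivity)
      hpow hδ (mod_cast hcell i) fun a ha => ⟨f a,
        mem_filter.2 ⟨hfW a (hsub ha), (mem_filter.1 ha).2⟩, hfa a (hsub ha)⟩
    exact_mod_cast h
  have cells : ∑ i ∈ S, (#{w ∈ W | Nat.log 2 w = i} : ℝ) ≤ T ^ 2 := by
    rw [← Nat.cast_sum, ← card_eq_sum_card_image (Nat.log 2) W]
    exact card_le_of_forall_le (by positivity) fun w hw => ⟨hw₀ w hw, (hW w hw).2⟩
  have inverses : ∑ i ∈ S, ((2 : ℝ) ^ i)⁻¹ ≤ 4 / T :=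
    sum_image_log_inv_two_pow_le hT₀ fun w hw => (hW w hw).1
  calc (#B : ℝ) = ∑ i ∈ S, (#{a ∈ B | Nat.log 2 (f a) = i} : ℝ) := by
        rw [← Nat.cast_sum, ← card_eq_sum_card_fiberwise fun a ha =>
          mem_image_of_mem (Nat.log 2) (hfW a ha)]
    _ ≤ _ := sum_le_sum fun i _ => scale i
    _ = #S * (8 * T ^ 2 * δ ^ ((2 : ℝ) / 3)) + 24 * ∑ i ∈ S, (#{w ∈ W | Nat.log 2 w = i} : ℝ) +
        24 * (n * ∑ i ∈ S, ((2 : ℝ) ^ i)⁻¹) := by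
        simp only [sum_add_distrib, sum_const, nsmul_eq_mul, mul_sum]
    _ ≤ #S * (8 * T ^ 2 * δ ^ ((2 : ℝ) / 3)) + 24 * T ^ 2 + 24 * (n * (4 / T)) := by gcongr
    _ = _ := by rw [← hT]; field_simp; ring

lemma MulSidonK.card_le_of_dyadic_density (hB : B ⊆ Icc 1 n) (hBk : MulSidonK 3 B) (hT₁ : 1 ≤ T)
    (hT : T ^ 3 = n) {P : ℕ → Prop} [DecidablePred P] (hP : ∀ w, P w → T ≤ w ∧ w ≤ T ^ 2) {δ : ℝ}
    (hδ : 0 ≤ δ) (hcell : ∀ i, (#{w ∈ Ico (2 ^ i) (2 * 2 ^ i) | P w} : ℝ) ≤ δ * 2 ^ i)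
    {S : Finset ℕ} (hS : ∀ w ≤ n, P w → Nat.log 2 w ∈ S) (hdvd : ∀ a ∈ B, ∃ w, w ∣ a ∧ P w) :
    (#B : ℝ) ≤ #S * (8 * T ^ 2 * δ ^ ((2 : ℝ) / 3)) + 120 * T ^ 2 := by
  choose! f hfa hfP using hdvd
  have hfW : ∀ w ∈ B.image f, P w ∧ w ∈ Icc 1 n := forall_mem_image.2 fun a ha =>
    have ⟨ha₀, han⟩ := mem_Icc.1 (hB ha)
    ⟨hfP a ha, mem_Icc.2
      ⟨Nat.pos_of_dvd_of_pos (hfa a ha) ha₀, (Nat.le_of_dvd ha₀ (hfa a ha)).trans han⟩⟩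
  have h := hBk.card_le_of_card_log_eq_le (W := B.image f) hB hT₁ hT (fun w hw => hP w (hfW w hw).1)
    hδ (fun i => (Nat.cast_le.2 (card_le_card fun w hw => ?_)).trans (hcell i))
    fun a ha => ⟨f a, mem_image_of_mem f ha, hfa a ha⟩
  · have hscales : (B.image f).image (Nat.log 2) ⊆ S := image_subset_iff.2 fun w hw =>
      hS w (mem_Icc.1 (hfW w hw).2).2 (hfW w hw).1
    exact h.trans (by gcongr)
  · obtain ⟨hwW, rfl⟩ := mem_filter.1 hw
    have hw₀ : w ≠ 0 := Nat.one_le_iff_ne_zero.1 (mem_Icc.1 (hfW w hwW).2).1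
    rw [mem_filter, mem_Ico, mul_comm 2, ← pow_succ]
    exact ⟨⟨Nat.pow_log_le_self 2 hw₀, Nat.lt_pow_succ_log_self one_lt_two w⟩, (hfW w hwW).1⟩

end Counting

section Bounds

variable {n : ℕ} {A B : Finset ℕ} {T : ℝ}

lemma log_mem_Icc_of_sq_between {w m : ℕ} (hnw : n ≤ w ^ 2) (hwn : w ^ 2 ≤ n * (2 ^ m) ^ 2) :
    Nat.log 2 w ∈ Icc (Nat.log 2 n.sqrt) (Nat.log 2 n.sqrt + m) := by
  refine mem_Icc.2 ⟨Nat.log_mono_right ((Nat.sqrt_le_sqrt hnw).trans_eq (Nat.sqrt_eq' w)),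
    Nat.le_of_lt_succ (Nat.log_lt_of_lt_pow' (by omega) ?_)⟩
  refine lt_of_pow_lt_pow_left₀ 2 (by positivity) ?_
  calc w ^ 2 ≤ n * (2 ^ m) ^ 2 := hwn
    _ < (n.sqrt + 1) ^ 2 * (2 ^ m) ^ 2 := by gcongr; exact Nat.lt_succ_sqrt' n
    _ ≤ (2 ^ (Nat.log 2 n.sqrt + 1)) ^ 2 * (2 ^ m) ^ 2 := by
      gcongr; exact Nat.lt_pow_succ_log_self one_lt_two _
    _ = (2 ^ (Nat.log 2 n.sqrt + m + 1)) ^ 2 := by ring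

lemma MulSidonK.card_le_of_sq_between (hB : B ⊆ Icc 1 n) (hBk : MulSidonK 3 B) (hT₁ : 1 ≤ T)
    (hT : T ^ 3 = n) {m : ℕ} (hm : ((2 : ℝ) ^ m) ^ 2 ≤ T)
    (hdvd : ∀ a ∈ B, ∃ w, w ∣ a ∧ n ≤ w ^ 2 ∧ w ^ 2 ≤ n * (2 ^ m) ^ 2) :
    (#B : ℝ) ≤ (m + 1) * (8 * T ^ 2) + 120 * T ^ 2 := by
  have hbetween : ∀ w : ℕ, n ≤ w ^ 2 ∧ w ^ 2 ≤ n * (2 ^ m) ^ 2 → T ≤ w ∧ w ≤ T ^ 2 := by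
    refine fun w ⟨hnw, hwn⟩ => ⟨le_of_pow_le_pow_left₀ two_ne_zero (by positivity) ?_,
      le_of_pow_le_pow_left₀ two_ne_zero (by positivity) ?_⟩
    · calc T ^ 2 ≤ T ^ 3 := pow_le_pow_right₀ hT₁ (by norm_num)
        _ = n := hT
        _ ≤ (w : ℝ) ^ 2 := mod_cast hnw
    · calc (w : ℝ) ^ 2 ≤ n * (2 ^ m) ^ 2 := mod_cast hwn
        _ ≤ T ^ 3 * T := by rw [hT]; gcongr
        _ = (T ^ 2) ^ 2 := by ring
  have hcell : ∀ i, (#{w ∈ Ico (2 ^ i) (2 * 2 ^ i) | n ≤ w ^ 2 ∧ w ^ 2 ≤ n * (2 ^ m) ^ 2} : ℝ) ≤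
      1 * 2 ^ i := by
    intro i
    rw [one_mul]
    norm_cast
    exact (card_filter_le _ _).trans_eq (by rw [Nat.card_Ico, two_mul, Nat.add_sub_cancel])
  have h := hBk.card_le_of_dyadic_density (P := fun w => n ≤ w ^ 2 ∧ w ^ 2 ≤ n * (2 ^ m) ^ 2)
    hB hT₁ hT hbetween zero_le_one hcell
    (fun w _ hw => log_mem_Icc_of_sq_between hw.1 hw.2) hdvd
  rw [Real.one_rpow, mul_one, Nat.card_Icc, add_assoc, Nat.add_sub_cancel_left] at h
  exact_mod_cast h

lemma MulSidonK.card_le_of_isRough_dvd (hB : B ⊆ Icc 1 n) (hBk : MulSidonK 3 B) (hT₁ : 1 ≤ T)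
    (hT : T ^ 3 = n) {z : ℕ} (hz : 2 ≤ z) (hzT : (z : ℝ) ^ 2 ≤ T)
    (hdvd : ∀ a ∈ B, ∃ w, w ∣ a ∧ IsRough z w ∧ n ≤ w ^ 3 ∧ w ^ 3 ≤ n ^ 2) :
    (#B : ℝ) ≤ (Nat.log 2 n + 1) * (8 * T ^ 2 * (54 / Real.log z) ^ ((2 : ℝ) / 3)) +
      120 * T ^ 2 := by
  have hlog : 0 < Real.log z := Real.log_pos (mod_cast hz)
  have hbetween : ∀ w : ℕ, IsRough z w ∧ n ≤ w ^ 3 ∧ w ^ 3 ≤ n ^ 2 → T ≤ w ∧ w ≤ T ^ 2 := by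
    refine fun w ⟨_, hnw, hwn⟩ => ⟨le_of_pow_le_pow_left₀ three_ne_zero (by positivity) ?_,
      le_of_pow_le_pow_left₀ three_ne_zero (by positivity) ?_⟩
    · rw [hT]; exact_mod_cast hnw
    · rw [pow_right_comm, hT]; exact_mod_cast hwn
  have hcell : ∀ i, (#{w ∈ Ico (2 ^ i) (2 * 2 ^ i) |
      IsRough z w ∧ n ≤ w ^ 3 ∧ w ^ 3 ≤ n ^ 2} : ℝ) ≤ 54 / Real.log z * 2 ^ i := by
    intro i
    obtain hempty | ⟨w, hw⟩ := eq_empty_or_nonempty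
      {w ∈ Ico (2 ^ i) (2 * 2 ^ i) | IsRough z w ∧ n ≤ w ^ 3 ∧ w ^ 3 ≤ n ^ 2}
    · rw [hempty, card_empty, Nat.cast_zero]; positivity
    have hzi : z ≤ 2 ^ i := by
      obtain ⟨hwi, hw⟩ := mem_filter.1 hw
      have hzw : z ^ 2 ≤ w := mod_cast hzT.trans (hbetween w hw).1
      nlinarith [(mem_Ico.1 hwi).2]
    rw [div_mul_eq_mul_div, le_div_iff₀ hlog]
    refine le_trans ?_ (mod_cast card_isRough_mul_log_le hz hzi)
    gcongr with w
    exact And.left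
  have h := hBk.card_le_of_dyadic_density
    (P := fun w => IsRough z w ∧ n ≤ w ^ 3 ∧ w ^ 3 ≤ n ^ 2) (S := range (Nat.log 2 n + 1))
    hB hT₁ hT hbetween (by positivity) hcell
    (fun w hwn _ => mem_range.2 (Nat.lt_succ_of_le (Nat.log_mono_right hwn))) hdvd
  rw [card_range] at h
  exact_mod_cast h

lemma MulSidonK.card_three_le (hn : 2 ≤ n) (hA : A ⊆ Icc 1 n) (hAk : MulSidonK 3 A)
    (hT₁ : 1 ≤ T) (hT : T ^ 3 = n) {m : ℕ} (hm₁ : 1 ≤ m) (hm : ((2 : ℝ) ^ m) ^ 2 ≤ T) :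
    (#A : ℝ) ≤ n.primeCounting + (n / 2).primeCounting + T ^ 2 * (251 + 8 * m +
      8 * (Nat.log 2 n + 1) * (54 / (m * Real.log 2)) ^ ((2 : ℝ) / 3)) := by
  classical
  let large : ℕ → Prop := fun a => ∃ p, p.Prime ∧ p ∣ a ∧ n ^ 2 < p ^ 3
  let small : ℕ → Prop := fun a => a ^ 2 < n
  let middle : ℕ → Prop := fun a => ∃ w, w ∣ a ∧ n ≤ w ^ 2 ∧ w ^ 2 ≤ n * (2 ^ m) ^ 2
  let rough : ℕ → Prop := fun a => ∃ w, w ∣ a ∧ IsRough (2 ^ m) w ∧ n ≤ w ^ 3 ∧ w ^ 3 ≤ n ^ 2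
  let part : (ℕ → Prop) → Finset ℕ := fun P => {a ∈ A | P a}
  have hsub (P : ℕ → Prop) : part P ⊆ A := filter_subset P A
  have hmem (P : ℕ → Prop) : ∀ a ∈ part P, P a := fun a ha => (mem_filter.1 ha).2
  have hlarge := (hAk.mono (hsub large)).card_three_le_of_exists_prime ((hsub _).trans hA)
    (by positivity) hT (hmem large)
  have hsmall := card_le_of_forall_sq_lt ((hsub small).trans hA) hT₁ hT (hmem small)
  have hmiddle := (hAk.mono (hsub middle)).card_le_of_sq_between ((hsub _).trans hA)
    hT₁ hT hm (hmem middle)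
  have hrough := (hAk.mono (hsub rough)).card_le_of_isRough_dvd ((hsub _).trans hA)
    hT₁ hT (Nat.le_self_pow (by omega) 2) (by exact_mod_cast hm) (hmem rough)
  rw [Nat.cast_pow, Nat.cast_ofNat, Real.log_pow] at hrough
  have hcover : A ⊆ part large ∪ part small ∪ part middle ∪ part rough := by
    intro a ha
    simp only [part, mem_union, mem_filter, ha, true_and]
    by_cases hl : large a
    · exact .inl (.inl (.inl hl))
    obtain h | h := lt_or_ge (a ^ 2) n
    · exact .inl (.inl (.inr h))
    have hp : ∀ p, p.Prime → p ∣ a → p ^ 3 ≤ n ^ 2 := fun p hpp hpa =>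
      not_lt.1 fun h => hl ⟨p, hpp, hpa, h⟩
    exact (exists_dvd_isRough_or_sq_between (2 ^ m) hn h hp).elim .inr (.inl ∘ .inr)
  have hcard : (#A : ℝ) ≤ #(part large) + #(part small) + #(part middle) + #(part rough) := by
    norm_cast
    refine (card_le_card hcover).trans ((card_union_le _ _).trans ?_)
    gcongr
    refine (card_union_le _ _).trans ?_
    gcongr
    exact card_union_le _ _
  linarith

lemma MulSidonK.card_two_le_of_forall_prime (hA : A ⊆ Icc 1 n) (hAk : MulSidonK 2 A) (hT₀ : 0 ≤ T)
    (hT : T ^ 3 = n) (hp : ∀ a ∈ A, ∀ p, p.Prime → p ∣ a → p ^ 3 ≤ n ^ 2) :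
    (#A : ℝ) ≤ T ^ 2 + T ^ ((5 : ℝ) / 2) := by
  obtain ⟨r, _, hr, hcard⟩ := hAk.exists_cycleFree (by norm_num) (X := Icc 1 ⌊T ^ 2⌋₊)
    (Y := Icc 1 n.sqrt) fun a ha => by
      obtain ⟨ha₀, han⟩ := mem_Icc.1 (hA ha)
      obtain ⟨u, v, rfl, hu, hv⟩ := exists_mul_eq_sq_le_cube_le ha₀ han (hp a ha)
      refine ⟨v, mem_Icc.2 ⟨Nat.pos_of_mul_pos_left ha₀, Nat.le_floor ?_⟩,
        u, mem_Icc.2 ⟨Nat.pos_of_mul_pos_right ha₀, Nat.le_sqrt'.2 hu⟩, mul_comm v u⟩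
      refine le_of_pow_le_pow_left₀ three_ne_zero (by positivity) ?_
      rw [pow_right_comm, hT]
      exact_mod_cast hv
  have h := hr.sq_card_interedges_two_le (Icc 1 ⌊T ^ 2⌋₊) (Icc 1 n.sqrt)
  rw [← hcard, Nat.card_Icc, Nat.card_Icc, Nat.add_sub_cancel, Nat.add_sub_cancel] at h
  have hquad : (#A : ℝ) ^ 2 ≤ T ^ 2 * (#A + T ^ 3) := by
    calc (#A : ℝ) ^ 2 ≤ ⌊T ^ 2⌋₊ * (#A + (n.sqrt : ℝ) ^ 2) := mod_cast h
      _ ≤ T ^ 2 * (#A + T ^ 3) := by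
        gcongr
        · exact Nat.floor_le (by positivity)
        · rw [hT]; exact_mod_cast Nat.sqrt_le' n
  have hsq : (T ^ ((5 : ℝ) / 2)) ^ 2 = T ^ 5 := by
    rw [← Real.rpow_mul_natCast hT₀, ← Real.rpow_natCast]
    norm_num
  by_contra! hlt
  nlinarith [sq_nonneg T, Real.rpow_nonneg hT₀ ((5 : ℝ) / 2)]

lemma MulSidonK.card_two_le (hA : A ⊆ Icc 1 n) (hAk : MulSidonK 2 A) (hT₁ : 1 ≤ T)
    (hT : T ^ 3 = n) : (#A : ℝ) ≤ n.primeCounting + 3 * T ^ ((5 : ℝ) / 2) := by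
  classical
  have hT₀ : 0 ≤ T := by positivity
  let large : ℕ → Prop := fun a => ∃ p, p.Prime ∧ p ∣ a ∧ n ^ 2 < p ^ 3
  set L := {a ∈ A | large a}
  have hLA : L ⊆ A := filter_subset _ _
  have hlarge := (hAk.mono hLA).card_two_le_of_exists_prime (hLA.trans hA) hT₀ hT
    fun a ha => (mem_filter.1 ha).2
  have hrest := (hAk.mono (sdiff_subset (t := L))).card_two_le_of_forall_prime
    (sdiff_subset.trans hA) hT₀ hT fun a ha p hpp hpa => not_lt.1 fun h =>
      (mem_sdiff.1 ha).2 (mem_filter.2 ⟨(mem_sdiff.1 ha).1, p, hpp, hpa, h⟩)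
  have hpow : T ^ 2 ≤ T ^ ((5 : ℝ) / 2) := by
    rw [← Real.rpow_natCast]
    exact Real.rpow_le_rpow_of_exponent_le hT₁ (by norm_num)
  have hcard : (#(A \ L) : ℝ) + #L = #A := mod_cast card_sdiff_add_card_eq_card hLA
  linarith

end Bounds

section Asymptotics

open Filter

variable {n : ℕ} {A : Finset ℕ}

lemma natLog_two_add_one_le (hn : 1 ≤ Real.log n) : (Nat.log 2 n + 1 : ℝ) ≤ 3 * Real.log n := by
  have hlog : (Nat.log 2 n : ℝ) ≤ Real.log n / Real.log 2 := by
    exact_mod_cast Real.natLog_le_logb n 2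
  rw [le_div_iff₀ (Real.log_pos one_lt_two)] at hlog
  nlinarith [Real.log_two_gt_d9, Nat.cast_nonneg (α := ℝ) (Nat.log 2 n)]

lemma cubeRoot_pow_three (n : ℕ) : ((n : ℝ) ^ ((1 : ℝ) / 3)) ^ 3 = n := by
  rw [← Real.rpow_mul_natCast n.cast_nonneg]; norm_num

lemma two_pow_sq_le_cubeRoot {u : ℝ} {m : ℕ} (hu₃ : 3 ≤ u) (hu : u ^ 5 = Real.log n)
    (hmu : m ≤ u ^ 3) : ((2 : ℝ) ^ m) ^ 2 ≤ (n : ℝ) ^ ((1 : ℝ) / 3) := by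
  have hn : (0 : ℝ) < n := by
    refine n.cast_nonneg.lt_of_ne' fun hn => ?_
    rw [hn, Real.log_zero] at hu
    exact (by positivity : u ^ 5 ≠ 0) hu
  rw [← Real.log_le_log_iff (by positivity) (by positivity), Real.log_pow, Real.log_pow,
    Real.log_rpow hn, ← hu]
  calc ((2 : ℕ) : ℝ) * (m * Real.log 2) ≤ 2 * (u ^ 3 * 1) := by
        push_cast
        gcongr
        linarith [Real.log_two_lt_d9]
    _ ≤ 1 / 3 * (3 ^ 2 * u ^ 3) := by linarith [pow_nonneg (zero_le_three.trans hu₃) 3]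
    _ ≤ 1 / 3 * (u ^ 2 * u ^ 3) := by gcongr
    _ = 1 / 3 * u ^ 5 := by ring

lemma density_rpow_le {u m : ℝ} (hu : 0 < u) (hum : u ^ 3 < 2 * m) :
    (54 / (m * Real.log 2)) ^ ((2 : ℝ) / 3) ≤ 36 / u ^ 2 := by
  have hm : 0 < m := by linarith [pow_pos hu 3]
  calc (54 / (m * Real.log 2)) ^ ((2 : ℝ) / 3) ≤ ((6 / u) ^ 3) ^ ((2 : ℝ) / 3) := by
        rw [div_pow]
        gcongr ?_ ^ _
        rw [div_le_div_iff₀ (mul_pos hm (Real.log_pos one_lt_two)) (pow_pos hu 3)]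
        nlinarith [Real.log_two_gt_d9]
    _ = 36 / u ^ 2 := by
        rw [← Real.rpow_natCast_mul (by positivity)]
        norm_num [div_pow]

lemma MulSidonK.card_three_le_of_pow_five_eq_log (hA : A ⊆ Icc 1 n) (hAk : MulSidonK 3 A) {u : ℝ}
    (hu₃ : 3 ≤ u) (hu : u ^ 5 = Real.log n) :
    (#A : ℝ) ≤ n.primeCounting + (n / 2).primeCounting +
      (n : ℝ) ^ ((2 : ℝ) / 3) * (1123 * u ^ 3) := by
  have hlog₁ : 1 ≤ Real.log n := hu ▸ one_le_pow₀ (by linarith)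
  have hn : 2 ≤ n := by
    by_contra! hn
    interval_cases n <;> norm_num at hlog₁
  have hT₂ : ((n : ℝ) ^ ((1 : ℝ) / 3)) ^ 2 = (n : ℝ) ^ ((2 : ℝ) / 3) := by
    rw [← Real.rpow_mul_natCast n.cast_nonneg]; norm_num
  have hT₁ : 1 ≤ (n : ℝ) ^ ((1 : ℝ) / 3) :=
    Real.one_le_rpow (by norm_cast; omega) (by norm_num)
  have hu₁ : 1 ≤ u ^ 3 := one_le_pow₀ (by linarith)
  have hmu : (⌊u ^ 3⌋₊ : ℝ) ≤ u ^ 3 := Nat.floor_le (by positivity)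
  have hum : u ^ 3 < 2 * ⌊u ^ 3⌋₊ := by
    have : (1 : ℝ) ≤ ⌊u ^ 3⌋₊ := mod_cast Nat.floor_pos.2 hu₁
    linarith [Nat.lt_floor_add_one (u ^ 3)]
  set m := ⌊u ^ 3⌋₊
  have hm := two_pow_sq_le_cubeRoot hu₃ hu hmu
  have hdensity := density_rpow_le (by linarith) hum
  have h := hAk.card_three_le hn hA hT₁ (cubeRoot_pow_three n) (Nat.floor_pos.2 hu₁) hm
  rw [hT₂] at h
  refine h.trans ?_
  gcongr
  calc 251 + 8 * m + 8 * (Nat.log 2 n + 1) * (54 / (m * Real.log 2)) ^ ((2 : ℝ) / 3)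
      ≤ 251 * u ^ 3 + 8 * u ^ 3 + 8 * (3 * u ^ 5) * (36 / u ^ 2) := by
        have := hu ▸ natLog_two_add_one_le hlog₁
        gcongr
        linarith
    _ = 1123 * u ^ 3 := by field_simp; ring

lemma tendsto_log_natCast_atTop : Tendsto (fun n : ℕ => Real.log n) atTop atTop :=
  Real.tendsto_log_atTop.comp tendsto_natCast_atTop_atTop

lemma eventually_mul_log_rpow_le {s c : ℝ} (hsc : s < c) (K : ℝ) :
    ∀ᶠ n : ℕ in atTop, K * Real.log n ^ s ≤ Real.log n ^ c := by
  filter_upwards [tendsto_log_natCast_atTop.eventually_gt_atTop 0,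
    tendsto_log_natCast_atTop.eventually
      ((tendsto_rpow_atTop (sub_pos.2 hsc)).eventually_ge_atTop K)] with n hn hK
  calc K * Real.log n ^ s ≤ Real.log n ^ (c - s) * Real.log n ^ s := by gcongr
    _ = Real.log n ^ c := by rw [← Real.rpow_add hn, sub_add_cancel]

lemma eventually_mul_log_le_rpow {t : ℝ} (ht : 0 < t) (K : ℝ) :
    ∀ᶠ n : ℕ in atTop, K * Real.log n ≤ (n : ℝ) ^ t := by
  have hbound := (((isLittleO_log_rpow_atTop ht).const_mul_left K).comp_tendsto
    (tendsto_natCast_atTop_atTop (R := ℝ))).bound one_pos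
  filter_upwards [hbound] with n hn
  simpa [abs_of_nonneg (Real.rpow_nonneg n.cast_nonneg t)] using (le_abs_self _).trans hn

lemma eventually_mul_rpow_le_primeCounting {s : ℝ} (hs : s < 1) (C : ℝ) :
    ∀ᶠ n : ℕ in atTop, C * (n : ℝ) ^ s ≤ n.primeCounting := by
  filter_upwards [eventually_mul_log_le_rpow (sub_pos.2 hs) (8 * C),
    eventually_mul_log_le_rpow one_pos 8, eventually_ge_atTop 2] with n hlog_s hlog_one hn
  have hn₀ : (0 : ℝ) < n := by positivity
  have hlog_succ : Real.log (n + 1) ≤ n / 4 :=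
    calc Real.log (n + 1) ≤ Real.log ((n : ℝ) ^ 2) := by
          gcongr
          norm_cast
          nlinarith
      _ = 8 * Real.log n / 4 := by rw [Real.log_pow]; push_cast; ring
      _ ≤ n / 4 := by rw [Real.rpow_one] at hlog_one; gcongr
  have hrpow : C * (n : ℝ) ^ s * Real.log n ≤ n / 8 :=
    calc C * (n : ℝ) ^ s * Real.log n = (n : ℝ) ^ s * (8 * C * Real.log n) / 8 := by ring
      _ ≤ (n : ℝ) ^ s * (n : ℝ) ^ (1 - s) / 8 := by gcongr
      _ = n / 8 := by rw [← Real.rpow_add hn₀, add_sub_cancel, Real.rpow_one]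
  have hlog_two := mul_le_mul_of_nonneg_left Real.log_two_gt_d9.le hn₀.le
  refine le_trans ?_ (Chebyshev.pi_ge n)
  rw [le_div_iff₀ (Real.log_pos (by exact_mod_cast hn))]
  linarith

lemma MulSidonK.eventually_card_two_le :
    ∀ᶠ n : ℕ in atTop, ∀ A ⊆ Icc 1 n, MulSidonK 2 A →
      (#A : ℝ) ≤ n.primeCounting + (n / 2).primeCounting := by
  have hπ := (Nat.tendsto_div_const_atTop two_ne_zero).eventually
    (eventually_mul_rpow_le_primeCounting (s := 5 / 6) (by norm_num) 9)
  filter_upwards [hπ, eventually_ge_atTop 2] with n hπ hn A hA hAk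
  have hT₁ : 1 ≤ (n : ℝ) ^ ((1 : ℝ) / 3) :=
    Real.one_le_rpow (by norm_cast; omega) (by norm_num)
  refine (hAk.card_two_le hA hT₁ (cubeRoot_pow_three n)).trans ?_
  gcongr
  calc 3 * ((n : ℝ) ^ ((1 : ℝ) / 3)) ^ ((5 : ℝ) / 2) = 3 * (n : ℝ) ^ ((5 : ℝ) / 6) := by
        rw [← Real.rpow_mul n.cast_nonneg]; norm_num
    _ ≤ 3 * (3 * (n / 2 : ℕ) : ℝ) ^ ((5 : ℝ) / 6) := by
        gcongr
        norm_cast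
        omega
    _ ≤ 3 * (3 * ((n / 2 : ℕ) : ℝ) ^ ((5 : ℝ) / 6)) := by
        rw [Real.mul_rpow (by norm_num) (by positivity)]
        gcongr
        exact Real.rpow_le_self_of_one_le (by norm_num) (by norm_num)
    _ = 9 * ((n / 2 : ℕ) : ℝ) ^ ((5 : ℝ) / 6) := by ring
    _ ≤ (n / 2).primeCounting := hπ

lemma MulSidonK.eventually_card_three_le :
    ∀ᶠ n : ℕ in atTop, ∀ A ⊆ Icc 1 n, MulSidonK 3 A →
      (#A : ℝ) ≤ n.primeCounting + (n / 2).primeCounting +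
        (n : ℝ) ^ ((2 : ℝ) / 3) * (1123 * Real.log n ^ ((3 : ℝ) / 5)) := by
  filter_upwards [tendsto_log_natCast_atTop.eventually_ge_atTop (3 ^ 5)] with n hn A hA hAk
  have hlog₀ : 0 ≤ Real.log n := Real.log_natCast_nonneg n
  have hroot : (Real.log n ^ ((1 : ℝ) / 5)) ^ 5 = Real.log n := by
    rw [← Real.rpow_mul_natCast hlog₀]; norm_num
  have hroot₃ : (Real.log n ^ ((1 : ℝ) / 5)) ^ 3 = Real.log n ^ ((3 : ℝ) / 5) := by
    rw [← Real.rpow_mul_natCast hlog₀]; norm_num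
  rw [← hroot₃]
  refine hAk.card_three_le_of_pow_five_eq_log hA ?_ hroot
  rwa [← pow_le_pow_iff_left₀ (by norm_num) (by positivity) (by norm_num : 5 ≠ 0), hroot]

theorem mulSidonK_card_upper_bound_general {k : ℕ} (hk3 : 3 ≤ k) (hkodd : Odd k) {c : ℝ}
    (hc : 3 / 5 < c) :
    ∃ N : ℕ, ∀ n : ℕ, N ≤ n → ∀ A ⊆ Icc 1 n, MulSidonK k A →
      (#A : ℝ) ≤ n.primeCounting + (n / 2).primeCounting +
        (n : ℝ) ^ ((2 : ℝ) / 3) * Real.log n ^ c := by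
  obtain ⟨j, rfl⟩ : ∃ j, k = 3 + j * 2 := by
    obtain ⟨i, rfl⟩ := hkodd
    exact ⟨i - 1, by omega⟩
  refine eventually_atTop.1 ?_
  filter_upwards [MulSidonK.eventually_card_two_le, MulSidonK.eventually_card_three_le,
    eventually_mul_log_rpow_le hc (1123 + 4 * j), tendsto_log_natCast_atTop.eventually_ge_atTop 1,
    eventually_ge_atTop 1] with n htwo hthree hpow hlog₁ hn A hA hAk
  have hn₁ : 1 ≤ (n : ℝ) ^ ((2 : ℝ) / 3) := Real.one_le_rpow (mod_cast hn) (by norm_num)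
  have hlog_pow : 1 ≤ Real.log n ^ ((3 : ℝ) / 5) := Real.one_le_rpow hlog₁ (by norm_num)
  have hinduct := MulSidonK.card_le_of_card_le hthree
    (fun B hB hBk => (htwo B hB hBk).trans (le_add_of_nonneg_right (by positivity))) j A hA hAk
  calc (#A : ℝ)
      ≤ n.primeCounting + (n / 2).primeCounting +
          (n : ℝ) ^ ((2 : ℝ) / 3) * (1123 * Real.log n ^ ((3 : ℝ) / 5)) + 4 * j * (1 * 1) := by
        refine hinduct.trans_eq ?_
        push_cast
        ring
    _ ≤ n.primeCounting + (n / 2).primeCounting +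
          (n : ℝ) ^ ((2 : ℝ) / 3) * (1123 * Real.log n ^ ((3 : ℝ) / 5)) +
          4 * j * ((n : ℝ) ^ ((2 : ℝ) / 3) * Real.log n ^ ((3 : ℝ) / 5)) := by gcongr
    _ = n.primeCounting + (n / 2).primeCounting +
          (n : ℝ) ^ ((2 : ℝ) / 3) * ((1123 + 4 * j) * Real.log n ^ ((3 : ℝ) / 5)) := by ring
    _ ≤ _ := by gcongr

end Asymptotics

theorem mulSidonK_card_upper_bound (k : ℕ) (hk3 : 3 ≤ k) (hkodd : Odd k) :
    ∀ ε : ℝ, 0 < ε → ∃ N : ℕ, ∀ n : ℕ, N ≤ n → ∀ A : Finset ℕ, A ⊆ Finset.Icc 1 n →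
      MulSidonK k A →
      (A.card : ℝ) ≤ (Nat.primeCounting n : ℝ) + (Nat.primeCounting (n / 2) : ℝ) +
        (n : ℝ) ^ ((2 : ℝ) / 3) *
          Real.log n ^ ((2 : ℝ) ^ ((1 : ℝ) / 3) - 1 / 3 + ε) := fun ε hε =>
  mulSidonK_card_upper_bound_general hk3 hkodd <| by
    linarith [Real.one_le_rpow (one_le_two (α := ℝ)) (by norm_num : (0 : ℝ) ≤ 1 / 3)]
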